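/- For every A > 0 there exists C > 0 such that for all integers n ≥ m ≥ 1 satisfying √(n·log n) ≤ A·m, writing u = n/m, one has | p_{n,m} / ( ρ(u)·exp(u·ξ(u)/(2m)) ) − 1 | ≤ C·log(u+1)/m. -/

import Mathlib

open Real

noncomputable section

/-- Predicate characterizing the Dickman function `ρ : [0,∞) → (0,∞)`:
continuous on `[0,∞)`, positive, equal to `1` on `[0,1]`, and satisfying the
delay differential equation `t·ρ'(t) + ρ(t-1) = 0` for `t > 1`. -/
def IsDickman (ρ : ℝ → ℝ) : Prop :=
  ContinuousOn ρ (Set.Ici 0) ∧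
  (∀ t : ℝ, 0 ≤ t → 0 < ρ t) ∧
  (∀ t ∈ Set.Icc (0:ℝ) 1, ρ t = 1) ∧
  (∀ t : ℝ, 1 < t → HasDerivAt ρ (-(ρ (t - 1)) / t) t)

/-- `ξ(u)`: for `u > 1`, the unique positive solution of `e^ξ = 1 + u·ξ`; otherwise `0`. -/
def xi (u : ℝ) : ℝ :=
  open Classical in
  if h : ∃ x : ℝ, 0 < x ∧ Real.exp x = 1 + u * x then h.choose else 0

/-- `p_{n,m}`: probability that a uniformly random permutation of `{1,…,n}` is `m`-friable,
i.e. has no cycle of length greater than `m`. -/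
def permProb (n m : ℕ) : ℝ :=
  (Nat.card {σ : Equiv.Perm (Fin n) // ∀ c ∈ σ.cycleType, c ≤ m} : ℝ) /
    (Nat.factorial n : ℝ)

/-- `p_{n,m,q}`: proportion of monic polynomials of degree `n` over a finite field `F`
(of cardinality `q`) that are `m`-friable, i.e. all of whose monic irreducible factors
have degree at most `m`. -/
def polyProb (F : Type) [Field F] [Fintype F] (n m : ℕ) : ℝ :=
  (Nat.card {f : Polynomial F // f.Monic ∧ f.natDegree = n ∧
      ∀ p : Polynomial F, p.Monic → Irreducible p → p ∣ f → p.natDegree ≤ m} : ℝ) /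
    (Fintype.card F : ℝ) ^ n

/-- `F_q(z) = ∏_{deg P ≤ m} (1 - (z/q)^{deg P})⁻¹`, the product over monic irreducible
polynomials `P` over `F` of degree at most `m`. -/
def FqFun (F : Type) [Field F] [Fintype F] (m : ℕ) (z : ℝ) : ℝ :=
  ∏ᶠ p ∈ {p : Polynomial F | p.Monic ∧ Irreducible p ∧ p.natDegree ≤ m},
    (1 - (z / (Fintype.card F : ℝ)) ^ p.natDegree)⁻¹

/-- `G_q(z) = F_q(z) · exp(-∑_{i=1}^m z^i/i)`. -/
def Gq (F : Type) [Field F] [Fintype F] (m : ℕ) (z : ℝ) : ℝ :=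
  FqFun F m z * Real.exp (-(∑ i ∈ Finset.Icc 1 m, z ^ i / (i : ℝ)))

/-- The coefficients `d_{m,i}`. -/
def dcoef (m i : ℕ) : ℝ :=
  if i = m then -(1 / (m : ℝ)) * ∑ j ∈ Finset.Icc 2 m, (1 : ℝ) / (j : ℝ)
  else Real.Gamma ((i : ℝ) + (i : ℝ) / (m : ℝ)) /
    (((m : ℝ) - (i : ℝ)) * (Nat.factorial i : ℝ) * Real.Gamma (1 + (i : ℝ) / (m : ℝ)))

/-- `T(s) = ∫₀^s ((e^t - 1)/t)·((t/m)/(1 - e^{-t/m}) - 1) dt`, integrand extended by `0` at `t = 0`. -/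
def Tfun (m : ℕ) (s : ℝ) : ℝ :=
  ∫ t in (0:ℝ)..s,
    if t = 0 then 0 else
      ((Real.exp t - 1) / t) * ((t / (m : ℝ)) / (1 - Real.exp (-t / (m : ℝ))) - 1)

end

noncomputable section


/-! ### Combinatorics: the recurrence for `permProb` -/

/-- The size `z_λ` of a centralizer. -/
def zz (s : Multiset ℕ) : ℕ := s.prod * ∏ k ∈ s.toFinset, (s.count k).factorial

lemma zz_cons (a : ℕ) (s : Multiset ℕ) :
    zz (a ::ₘ s) = a * (s.count a + 1) * zz s := by
  unfold zz
  have h1 : ∏ k ∈ s.toFinset, (s.count k).factorial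
      = ∏ k ∈ (a ::ₘ s).toFinset, (s.count k).factorial := by
    apply Finset.prod_subset
    · intro x hx; simp at hx ⊢; exact Or.inr hx
    · intro x _ hx
      simp at hx
      rw [Multiset.count_eq_zero_of_notMem hx]; rfl
  have h2 : ∏ k ∈ (a ::ₘ s).toFinset, ((a ::ₘ s).count k).factorial
      = ∏ k ∈ (a ::ₘ s).toFinset, ((s.count k).factorial * if k = a then s.count a + 1 else 1) := by
    apply Finset.prod_congr rfl
    intro k _
    split_ifs with h
    · subst h; rw [Multiset.count_cons_self, Nat.factorial_succ, mul_comm]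
    · rw [Multiset.count_cons_of_ne h, mul_one]
  rw [h1, h2, Finset.prod_mul_distrib, Finset.prod_ite_eq']
  simp
  ring

lemma zz_pos (s : Multiset ℕ) (hs : ∀ a ∈ s, 0 < a) : 0 < zz s := by
  unfold zz
  refine Nat.mul_pos ?_ (Finset.prod_pos fun k _ => Nat.factorial_pos _)
  refine Nat.pos_of_ne_zero fun h => ?_
  have := Multiset.prod_eq_zero_iff.1 h
  exact absurd (hs 0 this) (lt_irrefl _)

open Classical in
/-- Sum of `1/z_λ` over the partitions of `n` with parts at most `m`. -/
def WW (n m : ℕ) : ℝ := ∑ l : n.Partition, if ∀ c ∈ l.parts, c ≤ m then 1 / (zz l.parts : ℝ) else 0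

lemma WW_rec (n m : ℕ) : (n : ℝ) * WW n m = ∑ j ∈ Finset.Icc 1 n, if j ≤ m then WW (n - j) m else 0 := by
  classical
  have hsum : ∀ l : n.Partition, (n : ℝ) = ∑ j ∈ Finset.Icc 1 n, (j : ℝ) * (l.parts.count j : ℝ) := by
    intro l
    have h := Finset.sum_multiset_count_of_subset l.parts (Finset.Icc 1 n) (by
      intro x hx
      have hx' := Multiset.mem_toFinset.1 hx
      exact Finset.mem_Icc.2 ⟨l.parts_pos hx', l.le_of_mem_parts hx'⟩)
    rw [l.parts_sum] at h
    conv_lhs => rw [h]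
    push_cast [smul_eq_mul]
    exact Finset.sum_congr rfl fun x _ => mul_comm _ _
  have h1 : (n : ℝ) * WW n m = ∑ j ∈ Finset.Icc 1 n, ∑ l : n.Partition,
      (if ∀ c ∈ l.parts, c ≤ m then (j : ℝ) * (l.parts.count j : ℝ) / (zz l.parts : ℝ) else 0) := by
    rw [Finset.sum_comm, WW, Finset.mul_sum]
    refine Finset.sum_congr rfl fun l _ => ?_
    split_ifs with hc
    · rw [← Finset.sum_div, ← hsum l]; ring
    · simp
  rw [h1]
  refine Finset.sum_congr rfl fun j hj => ?_
  obtain ⟨hj1, hjn⟩ := Finset.mem_Icc.1 hj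
  have h2 : ∑ l : n.Partition,
      (if ∀ c ∈ l.parts, c ≤ m then (j : ℝ) * (l.parts.count j : ℝ) / (zz l.parts : ℝ) else 0)
      = ∑ l : {p : n.Partition // j ∈ p.parts},
      (if ∀ c ∈ l.1.parts, c ≤ m then (j : ℝ) * (l.1.parts.count j : ℝ) / (zz l.1.parts : ℝ) else 0) := by
    rw [← Finset.sum_subtype (Finset.univ.filter fun p : n.Partition => j ∈ p.parts) (by simp)
      (f := fun l : n.Partition => if ∀ c ∈ l.parts, c ≤ m then
        (j : ℝ) * (l.parts.count j : ℝ) / (zz l.parts : ℝ) else 0)]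
    symm
    apply Finset.sum_subset (Finset.subset_univ _)
    intro l _ hl
    have : j ∉ l.parts := by simpa using hl
    rw [Multiset.count_eq_zero_of_notMem this]; simp
  rw [h2, ← Equiv.sum_comp (Nat.Partition.partitionWithPartEquiv hj1 hjn).symm]
  split_ifs with hjm
  · unfold WW
    refine Finset.sum_congr rfl fun q _ => ?_
    rw [Nat.Partition.partitionWithPartEquiv_symm_apply_parts]
    have : (∀ c ∈ j ::ₘ q.parts, c ≤ m) ↔ ∀ c ∈ q.parts, c ≤ m := by
      simp [hjm]
    simp only [this]
    split_ifs with hc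
    · rw [zz_cons, Multiset.count_cons_self]
      have hz : (0:ℝ) < zz q.parts := by exact_mod_cast zz_pos _ fun a ha => q.parts_pos ha
      have hj0 : (0:ℝ) < j := by exact_mod_cast hj1
      push_cast
      field_simp
    · rfl
  · apply Finset.sum_eq_zero
    intro q _
    rw [Nat.Partition.partitionWithPartEquiv_symm_apply_parts, if_neg]
    simp [hjm]

lemma card_partition_eq {α : Type} [Fintype α] [DecidableEq α] (l : (Fintype.card α).Partition) :
    (((Finset.univ.filter fun σ : Equiv.Perm α => σ.partition = l).card : ℕ) : ℝ)
      = ((Fintype.card α).factorial : ℝ) / (zz l.parts : ℝ) := by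
  classical
  set s := l.parts.filter (fun n => 2 ≤ n) with hs
  have hdec : l.parts = s + Multiset.replicate (l.parts.count 1) 1 := by
    have := Multiset.filter_add_not (fun n => 2 ≤ n) l.parts
    have h1 : l.parts.filter (fun n => ¬ 2 ≤ n) = l.parts.filter (fun n => n = 1) := by
      apply Multiset.filter_congr
      intro x hx
      have := l.parts_pos hx
      omega
    rw [h1, Multiset.filter_eq'] at this
    exact this.symm
  have hsumm : s.sum + l.parts.count 1 = Fintype.card α := by
    have := l.parts_sum
    rw [hdec] at this
    simpa using this
  have hfil : (Finset.univ.filter fun σ : Equiv.Perm α => σ.partition = l)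
      = (Finset.univ.filter fun σ : Equiv.Perm α => σ.cycleType = s) := by
    ext σ
    simp only [Finset.mem_filter, Finset.mem_univ, true_and]
    constructor
    · intro h
      rw [← Equiv.Perm.filter_parts_partition_eq_cycleType, h]
    · intro h
      apply Nat.Partition.ext
      rw [Equiv.Perm.parts_partition, ← Equiv.Perm.sum_cycleType, h, hdec]
      congr 2
      omega
  have hc := Equiv.Perm.card_of_cycleType_mul_eq α s
  rw [if_pos ⟨by omega, fun a ha => (Multiset.mem_filter.1 ha).2⟩] at hc
  have hzs : zz (s + Multiset.replicate (l.parts.count 1) 1)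
      = (Fintype.card α - s.sum).factorial * zz s := by
    have hk : Fintype.card α - s.sum = l.parts.count 1 := by omega
    rw [hk]
    have h1s : (1:ℕ) ∉ s := by
      intro h
      have := (Multiset.mem_filter.1 h).2
      omega
    generalize l.parts.count 1 = k
    induction k with
    | zero => simp
    | succ k ih =>
      rw [Multiset.replicate_succ, Multiset.add_cons, zz_cons, ih, Multiset.count_add,
        Multiset.count_eq_zero_of_notMem h1s, Multiset.count_replicate_self, Nat.factorial_succ]
      ring
  rw [← hdec] at hzs
  have hzpos : (0:ℝ) < zz l.parts := by exact_mod_cast zz_pos _ fun a ha => l.parts_pos ha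
  rw [hfil, eq_div_iff hzpos.ne', hzs]
  rw [← hc]
  unfold zz
  push_cast
  ring

lemma perm_card_eq {α : Type} [Fintype α] [DecidableEq α] (m : ℕ) (hm : 1 ≤ m) :
    (Nat.card {σ : Equiv.Perm α // ∀ c ∈ σ.cycleType, c ≤ m} : ℝ) /
    (Nat.factorial (Fintype.card α) : ℝ) = WW (Fintype.card α) m := by
  classical
  have hf : (0:ℝ) < (Nat.factorial (Fintype.card α) : ℝ) := by exact_mod_cast Nat.factorial_pos _
  rw [div_eq_iff hf.ne', Nat.card_eq_fintype_card, Fintype.card_subtype]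
  rw [Finset.card_eq_sum_card_fiberwise (f := fun σ : Equiv.Perm α => σ.partition)
    (t := Finset.univ) (by intro x _; simp)]
  push_cast
  unfold WW
  rw [Finset.sum_mul]
  refine Finset.sum_congr rfl fun l _ => ?_
  have key : ∀ σ : Equiv.Perm α, (∀ c ∈ σ.cycleType, c ≤ m) ↔ ∀ c ∈ σ.partition.parts, c ≤ m := by
    intro σ
    rw [Equiv.Perm.parts_partition]
    constructor
    · intro h c hc
      rcases Multiset.mem_add.1 hc with h1 | h1
      · exact h c h1
      · rw [Multiset.eq_of_mem_replicate h1]; exact hm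
    · intro h c hc
      exact h c (Multiset.mem_add.2 (Or.inl hc))
  split_ifs with hc
  · rw [one_div_mul_eq_div, ← card_partition_eq l]
    congr 2
    ext σ
    simp only [Finset.mem_filter, Finset.mem_univ, true_and]
    constructor
    · exact fun h => h.2
    · intro h
      refine ⟨?_, h⟩
      rw [key, h]; exact hc
  · rw [zero_mul]
    norm_cast
    rw [Finset.card_eq_zero]
    ext σ
    simp only [Finset.mem_filter, Finset.mem_univ, true_and, Finset.notMem_empty, iff_false]
    rintro ⟨h1, h2⟩
    rw [key, h2] at h1
    exact hc h1

lemma permProb_eq (n m : ℕ) (hm : 1 ≤ m) : permProb n m = WW n m := by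
  have := perm_card_eq (α := Fin n) m hm
  rw [Fintype.card_fin] at this
  exact this

lemma permProb_rec (n m : ℕ) (hm : 1 ≤ m) (hn : m ≤ n) :
    (n : ℝ) * permProb n m = ∑ j ∈ Finset.Icc 1 m, permProb (n - j) m := by
  rw [permProb_eq n m hm, WW_rec, ← Finset.sum_filter]
  have : (Finset.Icc 1 n).filter (fun j => j ≤ m) = Finset.Icc 1 m := by
    ext j; simp only [Finset.mem_filter, Finset.mem_Icc]; omega
  rw [this]
  exact Finset.sum_congr rfl fun j _ => (permProb_eq _ m hm).symm

lemma permProb_one (n m : ℕ) (hn : n ≤ m) : permProb n m = 1 := by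
  unfold permProb
  have : ∀ σ : Equiv.Perm (Fin n), ∀ c ∈ σ.cycleType, c ≤ m := by
    intro σ c hc
    have := Equiv.Perm.le_card_support_of_mem_cycleType hc
    have h2 := Finset.card_le_univ σ.support
    rw [Fintype.card_fin] at h2
    omega
  rw [Nat.card_congr (Equiv.subtypeUnivEquiv this), Nat.card_eq_fintype_card, Fintype.card_perm,
    Fintype.card_fin]
  have hf : (0:ℝ) < (Nat.factorial n : ℝ) := by exact_mod_cast Nat.factorial_pos _
  exact div_self hf.ne'

lemma permProb_nonneg (n m : ℕ) : 0 ≤ permProb n m := by unfold permProb; positivity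



/-! ### The Dickman function -/

section dick

variable {ρ : ℝ → ℝ}

lemma dick_antitone (h : IsDickman ρ) : AntitoneOn ρ (Set.Ici 0) := by
  obtain ⟨hc, hp, h1, hd⟩ := h
  have hA : AntitoneOn ρ (Set.Ici 1) := by
    apply antitoneOn_of_deriv_nonpos (convex_Ici 1)
    · exact hc.mono (Set.Ici_subset_Ici.2 zero_le_one)
    · rw [interior_Ici]
      intro x hx
      exact (hd x hx).differentiableAt.differentiableWithinAt
    · rw [interior_Ici]
      intro x hx
      have hx' : 1 < x := hx
      rw [(hd x hx).deriv]
      have := hp (x - 1) (by linarith)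
      apply div_nonpos_of_nonpos_of_nonneg <;> linarith
  intro a ha b hb hab
  have ha' : 0 ≤ a := ha
  rcases le_total b 1 with hb1 | hb1
  · rw [h1 b ⟨hb, hb1⟩, h1 a ⟨ha, hab.trans hb1⟩]
  · rcases le_total a 1 with ha1 | ha1
    · rw [h1 a ⟨ha, ha1⟩, ← h1 1 ⟨zero_le_one, le_rfl⟩]
      exact hA (Set.mem_Ici.2 le_rfl) hb1 hb1
    · exact hA ha1 hb1 hab

lemma dick_le_one (h : IsDickman ρ) {x : ℝ} (hx : 0 ≤ x) : ρ x ≤ 1 := by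
  rw [← h.2.2.1 0 ⟨le_rfl, zero_le_one⟩]
  exact dick_antitone h (Set.mem_Ici.2 le_rfl) hx hx

/-- minus the derivative -/
def dd (ρ : ℝ → ℝ) (t : ℝ) : ℝ := ρ (t - 1) / t

lemma dd_antitone (h : IsDickman ρ) {a b : ℝ} (ha : 1 ≤ a) (hab : a ≤ b) : dd ρ b ≤ dd ρ a := by
  unfold dd
  have h1 : ρ (b - 1) ≤ ρ (a - 1) := dick_antitone h (Set.mem_Ici.2 (by linarith))
    (Set.mem_Ici.2 (by linarith)) (by linarith)
  have := h.2.1 (b - 1) (by linarith)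
  gcongr
  linarith

lemma dd_nonneg (h : IsDickman ρ) {a : ℝ} (ha : 1 ≤ a) : 0 ≤ dd ρ a := by
  have := h.2.1 (a - 1) (by linarith)
  unfold dd
  positivity

lemma dd_le_one (h : IsDickman ρ) {a : ℝ} (ha : 1 ≤ a) : dd ρ a ≤ 1 := by
  have := dick_le_one h (x := a - 1) (by linarith)
  unfold dd
  rw [div_le_one (by linarith)]
  linarith

lemma dick_hd (h : IsDickman ρ) {t : ℝ} (ht : 1 < t) : HasDerivAt ρ (-dd ρ t) t := by
  have := h.2.2.2 t ht
  rwa [neg_div] at this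

/-- mean value bounds on `[1,∞)` -/
lemma dick_mvt (h : IsDickman ρ) {a b : ℝ} (ha : 1 ≤ a) (hab : a ≤ b) :
    (b - a) * dd ρ b ≤ ρ a - ρ b ∧ ρ a - ρ b ≤ (b - a) * dd ρ a := by
  rcases hab.eq_or_lt with rfl | hlt
  · simp
  obtain ⟨c, hc, hc2⟩ := exists_hasDerivAt_eq_slope ρ (fun t => -dd ρ t) hlt
    (h.1.mono (fun x hx => Set.mem_Ici.2 (by linarith [hx.1])))
    (fun x hx => dick_hd h (by linarith [hx.1]))
  have hba : 0 < b - a := by linarith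
  rw [eq_div_iff hba.ne'] at hc2
  have h1 := dd_antitone h ha hc.1.le
  have h2 := dd_antitone h (by linarith [hc.1]) hc.2.le
  constructor <;> nlinarith

lemma dick_lip (h : IsDickman ρ) {a b : ℝ} (ha : 0 ≤ a) (hab : a ≤ b) :
    0 ≤ ρ a - ρ b ∧ ρ a - ρ b ≤ b - a := by
  refine ⟨sub_nonneg.2 (dick_antitone h ha (Set.mem_Ici.2 (ha.trans hab)) hab), ?_⟩
  rcases le_total b 1 with hb1 | hb1
  · rw [h.2.2.1 b ⟨ha.trans hab, hb1⟩, h.2.2.1 a ⟨ha, hab.trans hb1⟩]; linarith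
  rcases le_total a 1 with ha1 | ha1
  · have h2 := (dick_mvt h le_rfl hb1).2
    have h3 := dd_le_one h (le_refl (1:ℝ))
    rw [h.2.2.1 a ⟨ha, ha1⟩]
    rw [h.2.2.1 1 ⟨zero_le_one, le_rfl⟩] at h2
    nlinarith
  · have h2 := (dick_mvt h ha1 hab).2
    have h3 := dd_le_one h ha1
    nlinarith

lemma dick_integral (h : IsDickman ρ) (hC : Continuous ρ) {u : ℝ} (hu : 1 ≤ u) :
    ∫ x in (u-1)..u, ρ x = u * ρ u := by
  have hIntb : ∀ a b, IntervalIntegrable ρ MeasureTheory.volume a b :=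
    fun a b => hC.intervalIntegrable a b
  have hP : ∀ x, HasDerivAt (fun y => ∫ t in (0:ℝ)..y, ρ t) (ρ x) x :=
    fun x => intervalIntegral.integral_hasDerivAt_right (hIntb _ _)
      (hC.stronglyMeasurableAtFilter _ _) hC.continuousAt
  have hsub : ∀ x, ∫ t in (x-1)..x, ρ t = (∫ t in (0:ℝ)..x, ρ t) - ∫ t in (0:ℝ)..(x-1), ρ t := by
    intro x
    rw [intervalIntegral.integral_interval_sub_left (hIntb _ _) (hIntb _ _)]
  set G : ℝ → ℝ := fun x => x * ρ x - ((∫ t in (0:ℝ)..x, ρ t) - ∫ t in (0:ℝ)..(x-1), ρ t) with hG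
  have hGd : ∀ x, 1 < x → HasDerivAt G 0 x := by
    intro x hx
    have e1 := (hasDerivAt_id x).mul (dick_hd h hx)
    have e2 : HasDerivAt (fun y => ∫ t in (0:ℝ)..(y-1), ρ t) (ρ (x-1)) x := by
      have := (hP (x-1)).comp_sub_const x 1
      exact this
    have e3 := e1.sub ((hP x).sub e2)
    convert! e3 using 1
    simp only [id, dd]
    have : x ≠ 0 := by linarith
    field_simp
    ring
  have hGc : Continuous G := by
    have c1 : Continuous (fun y => ∫ t in (0:ℝ)..y, ρ t) :=
      continuous_iff_continuousAt.2 fun x => (hP x).continuousAt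
    have c2 : Continuous (fun y => ∫ t in (0:ℝ)..(y - 1), ρ t) :=
      c1.comp (continuous_id.sub continuous_const)
    exact (continuous_id.mul hC).sub (c1.sub c2)
  have hG1 : G 1 = 0 := by
    simp only [hG, sub_self, intervalIntegral.integral_same, sub_zero, one_mul]
    have : ∫ t in (0:ℝ)..1, ρ t = ∫ t in (0:ℝ)..1, (1:ℝ) := by
      apply intervalIntegral.integral_congr
      intro x hx
      rw [Set.uIcc_of_le zero_le_one] at hx
      exact h.2.2.1 x hx
    rw [this, h.2.2.1 1 ⟨zero_le_one, le_rfl⟩]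
    simp
  have hGu : G u = 0 := by
    rcases hu.eq_or_lt with rfl | hlt
    · exact hG1
    obtain ⟨c, hc, hc2⟩ := exists_hasDerivAt_eq_slope G (fun _ => 0) hlt hGc.continuousOn
      (fun x hx => hGd x hx.1)
    rw [eq_div_iff (by linarith)] at hc2
    linarith
  rw [hsub]
  simp only [hG] at hGu
  linarith

/-- minus the logarithmic derivative -/
def rr (ρ : ℝ → ℝ) (u : ℝ) : ℝ := ρ (u - 1) / (u * ρ u)

lemma rr_mul (h : IsDickman ρ) {u : ℝ} (hu : 1 ≤ u) : rr ρ u * ρ u = dd ρ u := by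
  have := h.2.1 u (by linarith)
  unfold rr dd
  field_simp

lemma rr_pos (h : IsDickman ρ) {u : ℝ} (hu : 1 ≤ u) : 0 < rr ρ u := by
  have := h.2.1 u (by linarith)
  have := h.2.1 (u - 1) (by linarith)
  unfold rr
  positivity

lemma rr_cont (h : IsDickman ρ) (hC : Continuous ρ) : ContinuousOn (rr ρ) (Set.Ici 1) := by
  unfold rr
  apply ContinuousOn.div
  · fun_prop
  · fun_prop
  · intro x hx
    have hx' : 1 ≤ x := hx
    have := h.2.1 x (by linarith)
    positivity

lemma rr_hd (h : IsDickman ρ) {u : ℝ} (hu : 2 < u) :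
    HasDerivAt (rr ρ) (rr ρ u * (rr ρ u - rr ρ (u-1) - 1/u)) u := by
  have p0 := h.2.1 u (by linarith)
  have p1 := h.2.1 (u - 1) (by linarith)
  have e1 : HasDerivAt (fun x => ρ (x - 1)) (-dd ρ (u-1)) u :=
    (dick_hd h (by linarith : 1 < u - 1)).comp_sub_const u 1
  have e2 := (hasDerivAt_id u).mul (dick_hd h (by linarith : 1 < u))
  have e3 := e1.div e2 (by simp only [Pi.mul_apply, id]; positivity)
  have hu0 : u ≠ 0 := by linarith
  have hu1 : u - 1 ≠ 0 := by linarith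
  convert! e3 using 1
  simp only [rr, dd, id, Pi.mul_apply]
  field_simp
  ring

lemma rr_mono_of (h : IsDickman ρ) (hC : Continuous ρ) {T : ℝ} (hT : 2 ≤ T)
    (hlt : ∀ u, 2 < u → u < T → 1 / u ≤ rr ρ u - rr ρ (u-1)) :
    MonotoneOn (rr ρ) (Set.Icc 1 T) := by
  have h12 : MonotoneOn (rr ρ) (Set.Icc 1 2) := by
    have hA : AntitoneOn (fun x => x * ρ x) (Set.Icc 1 2) := by
      apply antitoneOn_of_deriv_nonpos (convex_Icc 1 2)
      · fun_prop
      · rw [interior_Icc]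
        intro x hx
        exact ((hasDerivAt_id x).mul (dick_hd h hx.1)).differentiableAt.differentiableWithinAt
      · rw [interior_Icc]
        intro x hx
        have e := (hasDerivAt_id x).mul (dick_hd h hx.1)
        have e' : deriv (fun x => x * ρ x) x = _ := e.deriv
        rw [e']
        simp only [id, dd]
        have hx0 : x ≠ 0 := by linarith [hx.1]
        rw [h.2.2.1 (x-1) ⟨by linarith [hx.1], by linarith [hx.2]⟩]
        have := dick_le_one h (x := x) (by linarith [hx.1])
        field_simp
        linarith
    intro a ha b hb hab
    unfold rr
    rw [h.2.2.1 (a-1) ⟨by linarith [ha.1], by linarith [ha.2]⟩,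
      h.2.2.1 (b-1) ⟨by linarith [hb.1], by linarith [hb.2]⟩]
    have hb0 := h.2.1 b (by linarith [hb.1])
    have := hA ha hb hab
    have hbp : 0 < b := by linarith [hb.1]
    apply one_div_le_one_div_of_le (by positivity) this
  have h2T : MonotoneOn (rr ρ) (Set.Icc 2 T) := by
    apply monotoneOn_of_deriv_nonneg (convex_Icc 2 T)
    · exact (rr_cont h hC).mono (fun x hx => Set.mem_Ici.2 (by linarith [hx.1]))
    · rw [interior_Icc]
      intro x hx
      exact (rr_hd h hx.1).differentiableAt.differentiableWithinAt
    · rw [interior_Icc]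
      intro x hx
      rw [(rr_hd h hx.1).deriv]
      have := hlt x hx.1 hx.2
      have := rr_pos h (u := x) (by linarith [hx.1])
      apply mul_nonneg this.le
      linarith
  intro a ha b hb hab
  rcases le_total b 2 with hb2 | hb2
  · exact h12 ⟨ha.1, hab.trans hb2⟩ ⟨hb.1, hb2⟩ hab
  · rcases le_total a 2 with ha2 | ha2
    · exact (h12 ⟨ha.1, ha2⟩ ⟨one_le_two, le_rfl⟩ ha2).trans
        (h2T ⟨le_rfl, hT⟩ ⟨hb2, hb.2⟩ hb2)
    · exact h2T ⟨ha2, ha.2⟩ ⟨hb2, hb.2⟩ hab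

lemma rr_gap (h : IsDickman ρ) (hC : Continuous ρ) {T : ℝ} (hT : 2 ≤ T)
    (hm : MonotoneOn (rr ρ) (Set.Icc 1 T)) : 1 / T < rr ρ T - rr ρ (T-1) := by
  by_contra hcon
  push Not at hcon
  have hT0 : 0 < T := by linarith
  have hcr : ContinuousOn (rr ρ) (Set.Icc (T-1) T) :=
    (rr_cont h hC).mono (fun x hx => Set.mem_Ici.2 (by linarith [hx.1]))
  have hlt : ∫ x in (T-1)..T, (rr ρ T - rr ρ x) * ρ x < ∫ x in (T-1)..T, (1/T) * ρ x := by
    apply intervalIntegral.integral_lt_integral_of_continuousOn_of_le_of_exists_lt (by linarith)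
    · exact (continuousOn_const.sub hcr).mul hC.continuousOn
    · fun_prop
    · intro x hx
      have := h.2.1 x (by linarith [hx.1])
      have := hm ⟨by linarith, by linarith⟩ ⟨by linarith [hx.1], hx.2⟩ hx.1.le
      apply mul_le_mul_of_nonneg_right _ (by linarith)
      linarith
    · refine ⟨T, ⟨by linarith, le_rfl⟩, ?_⟩
      have := h.2.1 T (by linarith)
      rw [sub_self, zero_mul]
      positivity
  rw [intervalIntegral.integral_const_mul, dick_integral h hC (by linarith)] at hlt
  have hder : ∫ x in (T-1)..T, rr ρ x * ρ x = ρ (T-1) - ρ T := by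
    have e : ∫ x in (T-1)..T, rr ρ x * ρ x = (-ρ) T - (-ρ) (T-1) := by
      apply intervalIntegral.integral_eq_sub_of_hasDerivAt_of_le (by linarith)
      · exact hC.neg.continuousOn
      · intro x hx
        have hx1 : 1 < x := by linarith [hx.1]
        rw [rr_mul h hx1.le]
        simpa using (dick_hd h hx1).neg
      · apply ContinuousOn.intervalIntegrable
        rw [Set.uIcc_of_le (by linarith)]
        exact hcr.mul hC.continuousOn
    rw [e]; simp; ring
  have hsplit : ∫ x in (T-1)..T, (rr ρ T - rr ρ x) * ρ x
      = rr ρ T * (T * ρ T) - (ρ (T-1) - ρ T) := by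
    rw [← hder, ← dick_integral h hC (by linarith : 1 ≤ T), ← intervalIntegral.integral_const_mul,
      ← intervalIntegral.integral_sub]
    · apply intervalIntegral.integral_congr
      intro x _
      simp only
      ring
    · exact (continuous_const.mul hC).intervalIntegrable _ _
    · apply ContinuousOn.intervalIntegrable
      rw [Set.uIcc_of_le (by linarith)]
      exact hcr.mul hC.continuousOn
  rw [hsplit] at hlt
  have hTr := h.2.1 T (by linarith)
  have : rr ρ T * (T * ρ T) = ρ (T-1) := by unfold rr; field_simp
  rw [this] at hlt
  have : 1 / T * (T * ρ T) = ρ T := by field_simp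
  linarith

lemma rr_mono (h : IsDickman ρ) (hC : Continuous ρ) : MonotoneOn (rr ρ) (Set.Ici 1) := by
  have hall : ∀ u, 2 ≤ u → 1 / u < rr ρ u - rr ρ (u-1) := by
    by_contra hcon
    push Not at hcon
    obtain ⟨u0, hu0, hu0'⟩ := hcon
    set B : Set ℝ := Set.Ici 2 ∩ {u | rr ρ u - rr ρ (u-1) ≤ 1/u} with hB
    have hne : B.Nonempty := ⟨u0, hu0, hu0'⟩
    have hbd : BddBelow B := ⟨2, fun x hx => hx.1⟩
    have hcl : IsClosed B := by
      have hc := rr_cont h hC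
      have hf : ContinuousOn (fun u => rr ρ u - rr ρ (u-1) - 1/u) (Set.Ici 2) := by
        refine ContinuousOn.sub (ContinuousOn.sub ?_ ?_) ?_
        · exact hc.mono (Set.Ici_subset_Ici.2 one_le_two)
        · refine hc.comp (by fun_prop) ?_
          intro x hx
          have : 2 ≤ x := hx
          exact Set.mem_Ici.2 (by linarith)
        · apply ContinuousOn.div (by fun_prop) (by fun_prop)
          intro x hx
          have : 2 ≤ x := hx
          linarith
      have := hf.preimage_isClosed_of_isClosed isClosed_Ici (isClosed_Iic (a := (0:ℝ)))
      convert this using 1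
      ext x
      simp only [hB, Set.mem_inter_iff, Set.mem_ofPred_eq, Set.mem_preimage, Set.mem_Iic, sub_nonpos]
    have hmem := hcl.csInf_mem hne hbd
    set T := sInf B
    have hT : 2 ≤ T := hmem.1
    have hm := rr_mono_of h hC hT (fun u h2 huT => by
      by_contra hh
      push Not at hh
      exact absurd (csInf_le hbd (⟨h2.le, hh.le⟩ : u ∈ B)) (not_le.2 huT))
    exact absurd (rr_gap h hC hT hm) (not_lt.2 hmem.2)
  intro a ha b hb hab
  have ha' : 1 ≤ a := ha
  exact rr_mono_of h hC (T := b + 1) (by linarith) (fun u h2 _ => (hall u h2.le).le)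
    ⟨ha', by linarith⟩ ⟨hb, by linarith⟩ hab

lemma log_mvt (h : IsDickman ρ) (hC : Continuous ρ) {a b : ℝ} (ha : 1 ≤ a) (hab : a ≤ b) :
    (b - a) * rr ρ a ≤ Real.log (ρ a) - Real.log (ρ b) ∧
    Real.log (ρ a) - Real.log (ρ b) ≤ (b - a) * rr ρ b := by
  rcases hab.eq_or_lt with rfl | hlt
  · simp
  obtain ⟨c, hc, hc2⟩ := exists_hasDerivAt_eq_slope (fun x => Real.log (ρ x)) (fun t => -rr ρ t) hlt
    (by
      apply ContinuousOn.log hC.continuousOn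
      intro x hx
      exact (h.2.1 x (by linarith [hx.1])).ne')
    (fun x hx => by
      have hx1 : 1 < x := by linarith [hx.1]
      have hp := h.2.1 x (by linarith)
      have := (dick_hd h hx1).log hp.ne'
      convert this using 1
      rw [← rr_mul h hx1.le]
      field_simp)
  have hba : 0 < b - a := by linarith
  rw [eq_div_iff hba.ne'] at hc2
  have h1 := rr_mono h hC ha (Set.mem_Ici.2 (by linarith [hc.1])) hc.1.le
  have h2 := rr_mono h hC (Set.mem_Ici.2 (by linarith [hc.1] : 1 ≤ c)) (Set.mem_Ici.2 (by linarith)) hc.2.le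
  constructor <;> nlinarith

lemma int_exp (u c : ℝ) (hc : c ≠ 0) : ∫ x in (u-1)..u, Real.exp ((u - x) * c) = (Real.exp c - 1) / c := by
  have e : ∫ x in (u-1)..u, Real.exp ((u - x) * c)
      = -(Real.exp ((u - u) * c) / c) - -(Real.exp ((u - (u-1)) * c) / c) := by
    apply intervalIntegral.integral_eq_sub_of_hasDerivAt (f := fun x => -(Real.exp ((u - x) * c) / c))
    · intro x _
      have h1 : HasDerivAt (fun x => (u - x) * c) (-1 * c) x :=
        ((hasDerivAt_id x).const_sub u).mul_const c
      have h2 := (h1.exp.div_const c).neg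
      convert! h2 using 1
      field_simp
    · apply Continuous.intervalIntegrable
      fun_prop
  rw [e]
  have : u - (u - 1) = 1 := by ring
  rw [this, sub_self, zero_mul, Real.exp_zero, one_mul]
  field_simp
  ring

lemma rr_exp_lower (h : IsDickman ρ) (hC : Continuous ρ) {u : ℝ} (hu : 2 ≤ u) :
    1 + u * rr ρ u ≤ Real.exp (rr ρ u) := by
  have hr := rr_pos h (u := u) (by linarith)
  have hp := h.2.1 u (by linarith)
  have hle : ∫ x in (u-1)..u, ρ x ≤ ∫ x in (u-1)..u, ρ u * Real.exp ((u - x) * rr ρ u) := by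
    apply intervalIntegral.integral_mono_on (by linarith) (hC.intervalIntegrable _ _)
    · apply Continuous.intervalIntegrable; fun_prop
    · intro x hx
      have hx0 := h.2.1 x (by linarith [hx.1])
      have := (log_mvt h hC (by linarith [hx.1] : 1 ≤ x) hx.2).2
      rw [← Real.exp_log hx0]
      conv_rhs => rw [← Real.exp_log hp]
      rw [← Real.exp_add]
      apply Real.exp_le_exp.2
      linarith
  rw [dick_integral h hC (by linarith), intervalIntegral.integral_const_mul, int_exp _ _ hr.ne',
    mul_comm u, mul_le_mul_iff_right₀ hp, le_div_iff₀ hr] at hle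
  linarith

lemma rr_ge_one (h : IsDickman ρ) (hC : Continuous ρ) {u : ℝ} (hu : 1 ≤ u) : 1 ≤ rr ρ u := by
  have := rr_mono h hC (Set.mem_Ici.2 le_rfl) hu hu
  have h1 : rr ρ 1 = 1 := by
    unfold rr
    rw [h.2.2.1 1 ⟨zero_le_one, le_rfl⟩, h.2.2.1 (1-1) ⟨by norm_num, by norm_num⟩]
    norm_num
  linarith

lemma rr_exp_upper (h : IsDickman ρ) (hC : Continuous ρ) {u : ℝ} (hu : 2 ≤ u) :
    0 < Real.log (u * rr ρ u) ∧ u * rr ρ u ≤ 1 + u * Real.log (u * rr ρ u) := by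
  have hr := rr_ge_one h hC (u := u) (by linarith)
  have hp := h.2.1 u (by linarith)
  have hp1 := h.2.1 (u-1) (by linarith)
  have hX : 1 < u * rr ρ u := by nlinarith
  have hy := Real.log_pos hX
  refine ⟨hy, ?_⟩
  have hXeq : u * rr ρ u = ρ (u-1) / ρ u := by unfold rr; field_simp
  have hylog : Real.log (u * rr ρ u) = Real.log (ρ (u-1)) - Real.log (ρ u) := by
    rw [hXeq, Real.log_div hp1.ne' hp.ne']
  have hle : ∫ x in (u-1)..u, ρ u * Real.exp ((u - x) * Real.log (u * rr ρ u)) ≤ ∫ x in (u-1)..u, ρ x := by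
    apply intervalIntegral.integral_mono_on (by linarith) _ (hC.intervalIntegrable _ _)
    · intro x hx
      have hx0 := h.2.1 x (by linarith [hx.1])
      have h1 := (log_mvt h hC (by linarith [hx.1] : 1 ≤ x) hx.2).1
      have h2 := (log_mvt h hC (by linarith : 1 ≤ u - 1) hx.1).2
      conv_rhs => rw [← Real.exp_log hx0]
      conv_lhs => rw [← Real.exp_log hp]
      rw [← Real.exp_add]
      apply Real.exp_le_exp.2
      rw [hylog]
      have a1 : 0 ≤ u - x := by linarith [hx.2]
      have a2 : 0 ≤ x - (u - 1) := by linarith [hx.1]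
      have m1 := mul_le_mul_of_nonneg_left h1 a2
      have m2 := mul_le_mul_of_nonneg_left h2 a1
      nlinarith
    · apply Continuous.intervalIntegrable; fun_prop
  rw [dick_integral h hC (by linarith), intervalIntegral.integral_const_mul, int_exp _ _ hy.ne',
    mul_comm u (ρ u), mul_le_mul_iff_right₀ hp, div_le_iff₀ hy, Real.exp_log (by linarith)] at hle
  linarith

end dick

/-! ### The function `ξ` -/

lemma exp_chord {u x y : ℝ} (hx : 0 < x) (hxy : x < y) (h : Real.exp y ≤ 1 + u * y) :
    Real.exp x < 1 + u * x := by
  have hy : 0 < y := hx.trans hxy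
  have hxy' : x / y < 1 := (div_lt_one hy).2 hxy
  have := strictConvexOn_exp.2 (Set.mem_univ 0) (Set.mem_univ y) hy.ne
    (by linarith : 0 < 1 - x / y) (by positivity : 0 < x / y) (by ring)
  simp only [smul_eq_mul, mul_zero, zero_add, Real.exp_zero, mul_one] at this
  have e : x / y * y = x := by field_simp
  rw [e] at this
  have h2 : x / y * Real.exp y ≤ x / y * (1 + u * y) := by gcongr
  have h3 : x / y * (1 + u * y) = x / y + u * x := by field_simp
  linarith

lemma xi_spec {u : ℝ} (hu : 1 < u) : 0 < xi u ∧ Real.exp (xi u) = 1 + u * xi u := by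
  have hex : ∃ x : ℝ, 0 < x ∧ Real.exp x = 1 + u * x := by
    have hlog := Real.log_pos hu
    set a := Real.log u
    have h1 : Real.exp a < 1 + u * a := by
      rw [Real.exp_log (by linarith)]
      have := Real.one_sub_inv_le_log_of_pos (by linarith : 0 < u)
      have h2 : u * (1 - u⁻¹) < u * a + 1 := by
        have := mul_le_mul_of_nonneg_left this (by linarith : 0 ≤ u)
        linarith
      have : u * (1 - u⁻¹) = u - 1 := by field_simp
      have h3 := Real.log_lt_sub_one_of_pos (by positivity : 0 < u⁻¹) (by
        intro h; have := inv_eq_one.1 h; linarith)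
      rw [Real.log_inv] at h3
      have : u * (1 - u⁻¹) < u * a := by apply mul_lt_mul_of_pos_left _ (by linarith); linarith
      linarith
    have h2 : 1 + u * (2 * u + a) ≤ Real.exp (2 * u + a) := by
      rw [Real.exp_add, Real.exp_log (by linarith)]
      have := Real.quadratic_le_exp_of_nonneg (by linarith : 0 ≤ 2 * u)
      have ha : a ≤ u - 1 := Real.log_le_sub_one_of_pos (by linarith)
      nlinarith
    obtain ⟨x, hx, hx2⟩ := intermediate_value_Icc (by linarith : a ≤ 2 * u + a)
      (f := fun x => Real.exp x - (1 + u * x)) (by fun_prop) (show (0:ℝ) ∈ Set.Icc _ _ from ⟨by linarith, by linarith⟩)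
    refine ⟨x, by linarith [hx.1], ?_⟩
    simp only at hx2
    linarith
  unfold xi
  rw [dif_pos hex]
  exact hex.choose_spec

lemma xi_one : xi 1 = 0 := by
  unfold xi
  rw [dif_neg]
  rintro ⟨x, hx, h⟩
  have := Real.add_one_lt_exp hx.ne'
  linarith

lemma le_xi {u x : ℝ} (hu : 1 < u) (h : Real.exp x ≤ 1 + u * x) : x ≤ xi u := by
  by_contra hc
  push Not at hc
  obtain ⟨h1, h2⟩ := xi_spec hu
  have := exp_chord h1 hc h
  linarith

lemma xi_le {u x : ℝ} (hu : 1 < u) (hx : 0 < x) (h : 1 + u * x ≤ Real.exp x) : xi u ≤ x := by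
  by_contra hc
  push Not at hc
  obtain ⟨h1, h2⟩ := xi_spec hu
  have := exp_chord hx hc h2.le
  linarith

lemma xi_nonneg {u : ℝ} (hu : 1 ≤ u) : 0 ≤ xi u := by
  rcases hu.eq_or_lt with rfl | h
  · rw [xi_one]
  · exact (xi_spec h).1.le

lemma sinh_div_mono {x y : ℝ} (hx : 0 < x) (hxy : x ≤ y) : Real.sinh x / x ≤ Real.sinh y / y := by
  have hy : 0 < y := by linarith
  have hM : MonotoneOn (fun t => Real.sinh t / t) (Set.Ioi 0) := by
    have hd : ∀ t ∈ Set.Ioi (0:ℝ), HasDerivAt (fun t => Real.sinh t / t)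
        ((Real.cosh t * t - Real.sinh t * 1) / t ^ 2) t :=
      fun t ht => (Real.hasDerivAt_sinh t).div (hasDerivAt_id t) (ne_of_gt ht)
    apply monotoneOn_of_deriv_nonneg (convex_Ioi 0)
    · exact fun t ht => (hd t ht).continuousAt.continuousWithinAt
    · rw [interior_Ioi]
      exact fun t ht => (hd t ht).differentiableAt.differentiableWithinAt
    · rw [interior_Ioi]
      intro t ht
      have ht0 : 0 < t := ht
      rw [(hd t ht).deriv]
      apply div_nonneg _ (by positivity)
      have hg : MonotoneOn (fun t => Real.cosh t * t - Real.sinh t) (Set.Ici 0) := by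
        have hd2 : ∀ t : ℝ, HasDerivAt (fun t => Real.cosh t * t - Real.sinh t)
          (Real.sinh t * t + Real.cosh t * 1 - Real.cosh t) t :=
          fun t => ((Real.hasDerivAt_cosh t).mul (hasDerivAt_id t)).sub (Real.hasDerivAt_sinh t)
        apply monotoneOn_of_deriv_nonneg (convex_Ici 0)
        · exact fun t _ => (hd2 t).continuousAt.continuousWithinAt
        · exact fun t _ => (hd2 t).differentiableAt.differentiableWithinAt
        · rw [interior_Ici]
          intro s hs
          have hs0 : 0 < s := hs
          rw [(hd2 s).deriv]
          have := Real.sinh_nonneg_iff.2 hs0.le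
          nlinarith [mul_nonneg this hs0.le]
      have := hg (Set.mem_Ici.2 le_rfl) (Set.mem_Ici.2 ht0.le) ht0.le
      simp at this
      linarith
  exact hM hx hy hxy

lemma xi_sinh {u : ℝ} (hu : 1 < u) :
    Real.sinh (xi u / 2) / (xi u / 2) = u * Real.exp (-(xi u / 2)) := by
  obtain ⟨h1, h2⟩ := xi_spec hu
  rw [div_eq_iff (by positivity), Real.sinh_eq]
  have e : Real.exp (xi u) = Real.exp (xi u / 2) * Real.exp (xi u / 2) := by
    rw [← Real.exp_add]; ring_nf
  have e2 : Real.exp (xi u / 2) * Real.exp (-(xi u / 2)) = 1 := by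
    rw [← Real.exp_add]; simp
  have hE := Real.exp_pos (-(xi u / 2))
  have : Real.exp (xi u / 2) = (1 + u * xi u) * Real.exp (-(xi u / 2)) := by
    rw [← h2, e, mul_assoc, e2, mul_one]
  rw [this]
  ring

lemma xi_le_log {u : ℝ} (hu : 1 ≤ u) : xi u ≤ 2 * Real.log u := by
  rcases hu.eq_or_lt with rfl | h
  · simp [xi_one]
  obtain ⟨h1, h2⟩ := xi_spec h
  have h3 := xi_sinh h
  have h4 : 1 ≤ Real.sinh (xi u / 2) / (xi u / 2) := by
    rw [le_div_iff₀ (by positivity), one_mul]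
    exact Real.self_le_sinh_iff.2 (by positivity)
  rw [h3, Real.exp_neg, ← div_eq_mul_inv, le_div_iff₀ (Real.exp_pos _), one_mul] at h4
  have := (Real.le_log_iff_exp_le (by linarith)).2 h4
  linarith

lemma xi_mono {u v : ℝ} (hu : 1 ≤ u) (huv : u ≤ v) : xi u ≤ xi v := by
  rcases hu.eq_or_lt with rfl | h
  · rw [xi_one]; exact xi_nonneg huv
  obtain ⟨h1, h2⟩ := xi_spec h
  apply le_xi (by linarith)
  rw [h2]
  nlinarith

lemma xi_sub_le {u v : ℝ} (hu : 1 < u) (huv : u ≤ v) : xi v - xi u ≤ 2 * Real.log (v / u) := by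
  obtain ⟨h1, h2⟩ := xi_spec hu
  have hm := xi_mono hu.le huv
  have := sinh_div_mono (by positivity : 0 < xi u / 2) (by linarith : xi u / 2 ≤ xi v / 2)
  rw [xi_sinh hu, xi_sinh (by linarith)] at this
  have hl := Real.log_le_log (by positivity) this
  rw [Real.log_mul (by linarith) (Real.exp_pos _).ne', Real.log_mul (by linarith) (Real.exp_pos _).ne',
    Real.log_exp, Real.log_exp] at hl
  rw [Real.log_div (by linarith) (by linarith)]
  linarith

lemma rr_ge_xi {ρ : ℝ → ℝ} (h : IsDickman ρ) (hC : Continuous ρ) {u : ℝ} (hu : 2 ≤ u) :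
    xi u ≤ rr ρ u :=
  xi_le (by linarith) (rr_pos h (by linarith)) (rr_exp_lower h hC hu)

lemma rr_le_xi {ρ : ℝ → ℝ} (h : IsDickman ρ) (hC : Continuous ρ) {u : ℝ} (hu : 2 ≤ u) :
    u * rr ρ u ≤ 1 + u * xi u := by
  obtain ⟨h1, h2⟩ := rr_exp_upper h hC hu
  have hr := rr_pos h (u := u) (by linarith)
  have hpos : 0 < u * rr ρ u := by positivity
  have : Real.log (u * rr ρ u) ≤ xi u := by
    apply le_xi (by linarith)
    rw [Real.exp_log hpos]; exact h2
  have h3 := Real.exp_le_exp.2 this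
  rw [Real.exp_log hpos, (xi_spec (by linarith)).2] at h3
  exact h3



/-! ### Discretization -/

section disc

variable {ρ : ℝ → ℝ}

lemma seg_crude (h : IsDickman ρ) (hC : Continuous ρ) {t e : ℝ} (he : 0 ≤ e) (ht : 0 ≤ t - e / 2) :
    |(∫ x in (t - e/2)..(t + e/2), ρ x) - e * ρ t| ≤ e ^ 2 / 2 := by
  have e1 : (∫ x in (t - e/2)..(t + e/2), ρ x) - e * ρ t
      = ∫ x in (t - e/2)..(t + e/2), (ρ x - ρ t) := by
    rw [intervalIntegral.integral_sub (hC.intervalIntegrable _ _) (by simp)]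
    simp
  rw [e1]
  have := intervalIntegral.norm_integral_le_of_norm_le_const (a := t - e/2) (b := t + e/2)
    (f := fun x => ρ x - ρ t) (C := e / 2) (by
      intro x hx
      rw [Set.uIoc_of_le (by linarith)] at hx
      rw [Real.norm_eq_abs, abs_le]
      rcases le_total x t with hxt | hxt
      · have := dick_lip h (by linarith [hx.1] : 0 ≤ x) hxt
        constructor <;> linarith [hx.1]
      · have := dick_lip h (by linarith : 0 ≤ t) hxt
        constructor <;> linarith [hx.2])
  rw [Real.norm_eq_abs] at this
  refine this.trans (le_of_eq ?_)
  rw [abs_of_nonneg (by linarith)]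
  ring

lemma seg_fine (h : IsDickman ρ) (hC : Continuous ρ) {t e : ℝ} (he : 0 ≤ e) (ht : 1 ≤ t - e / 2) :
    0 ≤ (∫ x in (t - e/2)..(t + e/2), ρ x) - e * ρ t ∧
    (∫ x in (t - e/2)..(t + e/2), ρ x) - e * ρ t
      ≤ (e ^ 2 / 2) * (dd ρ (t - e/2) - dd ρ (t + e/2)) := by
  have hlin : ∫ x in (t - e/2)..(t + e/2), (dd ρ t * (x - t)) = 0 := by
    rw [intervalIntegral.integral_const_mul, intervalIntegral.integral_sub (by simp) (by simp)]
    simp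
    right
    ring
  have e1 : (∫ x in (t - e/2)..(t + e/2), ρ x) - e * ρ t
      = ∫ x in (t - e/2)..(t + e/2), (ρ x - ρ t + dd ρ t * (x - t)) := by
    rw [intervalIntegral.integral_add, hlin, intervalIntegral.integral_sub (hC.intervalIntegrable _ _)
      (by simp)]
    · simp
    · apply Continuous.intervalIntegrable; fun_prop
    · apply Continuous.intervalIntegrable; fun_prop
  have hbd : ∀ x ∈ Set.Icc (t - e/2) (t + e/2), 0 ≤ ρ x - ρ t + dd ρ t * (x - t) ∧
      ρ x - ρ t + dd ρ t * (x - t) ≤ (e/2) * (dd ρ (t - e/2) - dd ρ (t + e/2)) := by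
    intro x hx
    have d1 := dd_antitone h ht hx.1
    have d2 := dd_antitone h (by linarith [hx.1] : 1 ≤ x) hx.2
    have d3 := dd_antitone h ht (by linarith : t - e/2 ≤ t)
    have d4 := dd_antitone h (by linarith : 1 ≤ t) (by linarith : t ≤ t + e/2)
    rcases le_total x t with hxt | hxt
    · obtain ⟨m1, m2⟩ := dick_mvt h (by linarith [hx.1] : 1 ≤ x) hxt
      have d5 := dd_antitone h (by linarith [hx.1] : 1 ≤ x) hxt
      have : (t - x) * (dd ρ x - dd ρ t) ≤ (e/2) * (dd ρ (t - e/2) - dd ρ (t + e/2)) := by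
        apply mul_le_mul <;> linarith [hx.1]
      constructor <;> nlinarith
    · obtain ⟨m1, m2⟩ := dick_mvt h (by linarith : 1 ≤ t) hxt
      have d5 := dd_antitone h (by linarith : 1 ≤ t) hxt
      have : (x - t) * (dd ρ t - dd ρ x) ≤ (e/2) * (dd ρ (t - e/2) - dd ρ (t + e/2)) := by
        apply mul_le_mul <;> linarith [hx.2]
      constructor <;> nlinarith
  rw [e1]
  constructor
  · exact intervalIntegral.integral_nonneg (by linarith) fun x hx => (hbd x hx).1
  · have := intervalIntegral.integral_mono_on (μ := MeasureTheory.volume) (a := t - e/2) (b := t + e/2) (by linarith)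
      (f := fun x => ρ x - ρ t + dd ρ t * (x - t))
      (g := fun _ => (e/2) * (dd ρ (t - e/2) - dd ρ (t + e/2)))
      (by apply Continuous.intervalIntegrable; fun_prop) (by simp) (fun x hx => (hbd x hx).2)
    refine this.trans (le_of_eq ?_)
    rw [intervalIntegral.integral_const, smul_eq_mul]
    ring

lemma half_seg (h : IsDickman ρ) (hC : Continuous ρ) {U e K : ℝ} (he : 0 ≤ e) (hU : 0 ≤ U - e / 2)
    (hK : ∀ x ∈ Set.Icc (U - e/2) U, ρ x - ρ U ≤ (e / 2) * K) :
    0 ≤ (∫ x in (U - e/2)..U, ρ x) - e / 2 * ρ U ∧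
    (∫ x in (U - e/2)..U, ρ x) - e / 2 * ρ U ≤ (e ^ 2 / 4) * K := by
  have e1 : (∫ x in (U - e/2)..U, ρ x) - e / 2 * ρ U = ∫ x in (U - e/2)..U, (ρ x - ρ U) := by
    rw [intervalIntegral.integral_sub (hC.intervalIntegrable _ _) (by simp)]
    simp
  rw [e1]
  constructor
  · exact intervalIntegral.integral_nonneg (by linarith)
      fun x hx => (dick_lip h (by linarith [hx.1]) hx.2).1
  · have := intervalIntegral.integral_mono_on (μ := MeasureTheory.volume) (a := U - e/2) (b := U) (by linarith)
      (f := fun x => ρ x - ρ U) (g := fun _ => (e/2) * K)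
      (by apply Continuous.intervalIntegrable; fun_prop) (by simp) hK
    refine this.trans (le_of_eq ?_)
    rw [intervalIntegral.integral_const, smul_eq_mul]
    ring

lemma int_step (hC : Continuous ρ) (U e : ℝ) (k : ℕ) :
    ∫ x in (U - (k+1:ℕ) * e - e/2)..U, ρ x =
      (∫ x in (U - (k+1:ℕ) * e - e/2)..(U - (k+1:ℕ) * e + e/2), ρ x)
        + ∫ x in (U - k * e - e/2)..U, ρ x := by
  have : U - (k+1:ℕ) * e + e/2 = U - k * e - e/2 := by push_cast; ring
  rw [this, intervalIntegral.integral_add_adjacent_intervals (hC.intervalIntegrable _ _)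
    (hC.intervalIntegrable _ _)]

lemma multi_crude (h : IsDickman ρ) (hC : Continuous ρ) {U e : ℝ} (he : 0 ≤ e) (k : ℕ)
    (hU : 0 ≤ U - k * e - e / 2) :
    |(∫ x in (U - k * e - e/2)..U, ρ x) - e / 2 * ρ U - e * ∑ j ∈ Finset.Icc 1 k, ρ (U - j * e)|
      ≤ (e / 2) * (k * e + e / 2) := by
  induction k with
  | zero =>
    simp only [Nat.cast_zero, zero_mul, sub_zero] at hU ⊢
    obtain ⟨h1, h2⟩ := half_seg h hC (K := 1) he hU (fun x hx => by
      have := (dick_lip h (by linarith [hx.1]) hx.2).2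
      linarith [hx.1])
    simp only [Finset.Icc_eq_empty_of_lt zero_lt_one, Finset.sum_empty, mul_zero, sub_zero]
    rw [abs_of_nonneg h1]
    nlinarith
  | succ k ih =>
    have hcast : ((k + 1 : ℕ) : ℝ) = k + 1 := by push_cast; ring
    have ih := ih (by rw [hcast] at hU; linarith)
    have hs := seg_crude h hC (t := U - (k+1:ℕ) * e) he hU
    rw [int_step hC, Finset.sum_Icc_succ_top (by omega)]
    rw [abs_le] at *
    rw [hcast] at *
    constructor <;> nlinarith

lemma multi_fine (h : IsDickman ρ) (hC : Continuous ρ) {U e : ℝ} (he : 0 ≤ e) (k : ℕ)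
    (hU : 1 ≤ U - k * e - e / 2) :
    0 ≤ (∫ x in (U - k * e - e/2)..U, ρ x) - e / 2 * ρ U - e * ∑ j ∈ Finset.Icc 1 k, ρ (U - j * e) ∧
    (∫ x in (U - k * e - e/2)..U, ρ x) - e / 2 * ρ U - e * ∑ j ∈ Finset.Icc 1 k, ρ (U - j * e)
      ≤ (e ^ 2 / 2) * dd ρ (U - k * e - e/2) := by
  induction k with
  | zero =>
    simp only [Nat.cast_zero, zero_mul, sub_zero] at hU ⊢
    have hdn := dd_nonneg h hU
    obtain ⟨h1, h2⟩ := half_seg h hC (U := U) (e := e) (K := dd ρ (U - e/2)) he (by linarith) (fun x hx => by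
      have h1 := (dick_mvt h (by linarith [hx.1] : 1 ≤ x) hx.2).2
      have h2 := dd_antitone h hU hx.1
      have h3 := dd_nonneg h (by linarith [hx.1] : 1 ≤ x)
      have : (U - x) * dd ρ x ≤ (e / 2) * dd ρ (U - e/2) := by
        apply mul_le_mul <;> linarith [hx.1]
      linarith)
    simp only [Finset.Icc_eq_empty_of_lt zero_lt_one, Finset.sum_empty, mul_zero, sub_zero]
    refine ⟨h1, h2.trans ?_⟩
    apply mul_le_mul_of_nonneg_right _ hdn
    nlinarith [sq_nonneg e]
  | succ k ih =>
    have hcast : ((k + 1 : ℕ) : ℝ) = k + 1 := by push_cast; ring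
    obtain ⟨ih1, ih2⟩ := ih (by rw [hcast] at hU; linarith)
    obtain ⟨hs1, hs2⟩ := seg_fine h hC (t := U - (k+1:ℕ) * e) he hU
    have : U - (k+1:ℕ) * e + e/2 = U - k * e - e/2 := by push_cast; ring
    rw [int_step hC, Finset.sum_Icc_succ_top (by omega)]
    rw [this] at hs1 hs2 ⊢
    constructor <;> linarith

/-- the comparison function -/
def FF (ρ : ℝ → ℝ) (m n : ℕ) : ℝ := ρ (((n:ℝ) + 1/2) / ((m:ℝ) + 1/2))

lemma FF_pos (h : IsDickman ρ) (m n : ℕ) : 0 < FF ρ m n := h.2.1 _ (by positivity)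

lemma FF_sum {m n : ℕ} (hmn : m ≤ n) :
    ∑ j ∈ Finset.Icc 1 m, FF ρ m (n - j) =
      ∑ j ∈ Finset.Icc 1 m, ρ (((n:ℝ) + 1/2) / ((m:ℝ) + 1/2) - j * (1 / ((m:ℝ) + 1/2))) := by
  refine Finset.sum_congr rfl fun j hj => ?_
  have := (Finset.mem_Icc.1 hj).2
  unfold FF
  rw [Nat.cast_sub (by omega)]
  congr 1
  field_simp
  ring

lemma disc_crude (h : IsDickman ρ) (hC : Continuous ρ) {m n : ℕ} (hmn : m ≤ n) :
    |(n:ℝ) * FF ρ m n - ∑ j ∈ Finset.Icc 1 m, FF ρ m (n - j)| ≤ 1 / 2 := by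
  have hM : (0:ℝ) < (m:ℝ) + 1/2 := by positivity
  have hmn' : (m:ℝ) ≤ n := by exact_mod_cast hmn
  rw [FF_sum hmn]
  unfold FF
  set U := ((n:ℝ) + 1/2) / ((m:ℝ) + 1/2) with hU
  set e := 1 / ((m:ℝ) + 1/2) with he
  have he0 : 0 < e := by positivity
  have hU1 : 1 ≤ U := by rw [hU, le_div_iff₀ hM]; linarith
  have hme : U - m * e - e / 2 = U - 1 := by rw [he]; field_simp; ring
  have hme2 : m * e + e / 2 = 1 := by rw [he]; field_simp
  have := multi_crude h hC (U := U) he0.le m (by rw [hme]; linarith)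
  rw [hme, hme2, dick_integral h hC hU1] at this
  have hn : (n:ℝ) = (U - e / 2) / e := by rw [hU, he]; field_simp; ring
  have e1 : (n:ℝ) * ρ U - ∑ j ∈ Finset.Icc 1 m, ρ (U - j * e)
      = (U * ρ U - e / 2 * ρ U - e * ∑ j ∈ Finset.Icc 1 m, ρ (U - j * e)) / e := by
    rw [hn]; field_simp
  rw [e1, abs_div, abs_of_pos he0, div_le_iff₀ he0]
  linarith

lemma disc_fine (h : IsDickman ρ) (hC : Continuous ρ) {m n : ℕ} (hmn : m ≤ n)
    (hU2 : 2 ≤ ((n:ℝ) + 1/2) / ((m:ℝ) + 1/2)) :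
    0 ≤ (n:ℝ) * FF ρ m n - ∑ j ∈ Finset.Icc 1 m, FF ρ m (n - j) ∧
    (n:ℝ) * FF ρ m n - ∑ j ∈ Finset.Icc 1 m, FF ρ m (n - j) ≤
      1 / ((m:ℝ) + 1/2) / 2 * dd ρ (((n:ℝ) + 1/2) / ((m:ℝ) + 1/2) - 1) := by
  have hM : (0:ℝ) < (m:ℝ) + 1/2 := by positivity
  have hmn' : (m:ℝ) ≤ n := by exact_mod_cast hmn
  rw [FF_sum hmn]
  unfold FF
  set U := ((n:ℝ) + 1/2) / ((m:ℝ) + 1/2) with hU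
  set e := 1 / ((m:ℝ) + 1/2) with he
  have he0 : 0 < e := by positivity
  have hme : U - m * e - e / 2 = U - 1 := by rw [he]; field_simp; ring
  obtain ⟨h1, h2⟩ := multi_fine h hC (U := U) he0.le m (by rw [hme]; linarith)
  rw [hme, dick_integral h hC (by linarith)] at h1 h2
  have hn : (n:ℝ) = (U - e / 2) / e := by rw [hU, he]; field_simp; ring
  have e1 : (n:ℝ) * ρ U - ∑ j ∈ Finset.Icc 1 m, ρ (U - j * e)
      = (U * ρ U - e / 2 * ρ U - e * ∑ j ∈ Finset.Icc 1 m, ρ (U - j * e)) / e := by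
    rw [hn]; field_simp
  rw [e1]
  refine ⟨div_nonneg h1 he0.le, ?_⟩
  rw [div_le_iff₀ he0]
  refine h2.trans (le_of_eq ?_)
  ring

lemma FF_one (h : IsDickman ρ) {m n : ℕ} (hmn : n ≤ m) : FF ρ m n = 1 := by
  apply h.2.2.1
  have : (n:ℝ) ≤ m := by exact_mod_cast hmn
  refine ⟨by positivity, ?_⟩
  rw [div_le_one (by positivity)]
  linarith

lemma err_crude (h : IsDickman ρ) (hC : Continuous ρ) {m : ℕ} (hm : 1 ≤ m) (n : ℕ) :
    |permProb n m - FF ρ m n| ≤ (n:ℝ) / (m:ℝ) ^ 2 := by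
  induction n using Nat.strong_induction_on with
  | _ n ih =>
  have hm' : (1:ℝ) ≤ m := by exact_mod_cast hm
  rcases le_or_gt n m with hnm | hnm
  · rw [permProb_one n m hnm, FF_one h hnm]
    simp
    positivity
  have hmn' : (m:ℝ) ≤ n := by exact_mod_cast hnm.le
  have hn0 : (0:ℝ) < n := by linarith
  have hr := permProb_rec n m hm hnm.le
  have hd := disc_crude h hC hnm.le
  have e1 : (n:ℝ) * (permProb n m - FF ρ m n)
      = ∑ j ∈ Finset.Icc 1 m, (permProb (n-j) m - FF ρ m (n-j))
        - ((n:ℝ) * FF ρ m n - ∑ j ∈ Finset.Icc 1 m, FF ρ m (n - j)) := by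
    rw [Finset.sum_sub_distrib, ← hr]; ring
  have h2 : |∑ j ∈ Finset.Icc 1 m, (permProb (n-j) m - FF ρ m (n-j))| ≤
      ∑ j ∈ Finset.Icc 1 m, ((n:ℝ) - j) / (m:ℝ)^2 := by
    refine (Finset.abs_sum_le_sum_abs _ _).trans (Finset.sum_le_sum fun j hj => ?_)
    obtain ⟨hj1, hj2⟩ := Finset.mem_Icc.1 hj
    have := ih (n - j) (by omega)
    rwa [Nat.cast_sub (by omega)] at this
  have h3 : ∑ j ∈ Finset.Icc 1 m, (j:ℝ) = (m:ℝ) * (m + 1) / 2 := by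
    clear * -
    induction m with
    | zero => simp
    | succ k ih => rw [Finset.sum_Icc_succ_top (by omega), ih]; push_cast; ring
  have h6 : ∑ j ∈ Finset.Icc 1 m, ((n:ℝ) - j) / (m:ℝ)^2 = ((m:ℝ) * n - m * (m+1)/2) / (m:ℝ)^2 := by
    rw [← Finset.sum_div, Finset.sum_sub_distrib, h3]
    simp only [Finset.sum_const, Nat.card_Icc, Nat.add_sub_cancel, nsmul_eq_mul]
  rw [h6] at h2
  have h4 : (n:ℝ) * |permProb n m - FF ρ m n| ≤ ((m:ℝ) * n - m * (m+1)/2) / (m:ℝ)^2 + 1/2 := by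
    rw [← abs_of_pos hn0, ← abs_mul, abs_of_pos hn0, e1]
    exact (abs_sub _ _).trans (add_le_add h2 hd)
  have h5 : ((m:ℝ) * n - m * (m+1)/2) / (m:ℝ)^2 + 1/2 ≤ n * (n / (m:ℝ)^2) := by
    have : ((m:ℝ) * n - m * (m+1)/2) / (m:ℝ)^2 + 1/2 = (m * n - m / 2) / (m:ℝ)^2 := by
      field_simp; ring
    rw [this, ← mul_div_assoc]
    apply div_le_div_of_nonneg_right _ (by positivity)
    nlinarith
  exact le_of_mul_le_mul_left (h4.trans h5) hn0

lemma dick_lower (h : IsDickman ρ) (hC : Continuous ρ) {u : ℝ} (hu : 0 ≤ u) :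
    ρ u ^ 2 / (4 * (u + 1)) ≤ ρ (u + 1) := by
  have hi := dick_integral h hC (by linarith : 1 ≤ u + 1)
  have e : u + 1 - 1 = u := by ring
  rw [e] at hi
  have hp := h.2.1 u hu
  have hle := dick_le_one h hu
  have hsplit := intervalIntegral.integral_add_adjacent_intervals
    (hC.intervalIntegrable (μ := MeasureTheory.volume) u (u + ρ u / 2))
    (hC.intervalIntegrable (u + ρ u / 2) (u + 1))
  have h2 : 0 ≤ ∫ x in (u + ρ u / 2)..(u+1), ρ x :=
    intervalIntegral.integral_nonneg (by linarith) fun x hx => (h.2.1 x (by linarith [hx.1])).le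
  have h1 : ∫ x in u..(u + ρ u / 2), ρ u / 2 ≤ ∫ x in u..(u + ρ u / 2), ρ x := by
    apply intervalIntegral.integral_mono_on (by linarith) (by simp) (hC.intervalIntegrable _ _)
    intro x hx
    have := (dick_lip h hu hx.1).2
    linarith [hx.2]
  rw [intervalIntegral.integral_const, smul_eq_mul] at h1
  rw [div_le_iff₀ (by linarith)]
  nlinarith

lemma dick_three (h : IsDickman ρ) (hC : Continuous ρ) : 1 / 768 ≤ ρ 3 := by
  have h1 := dick_lower h hC (zero_le_one' ℝ)
  have h2 := dick_lower h hC (zero_le_two (α := ℝ))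
  rw [h.2.2.1 1 ⟨zero_le_one, le_rfl⟩] at h1
  norm_num at h1 h2
  have : (1/8:ℝ)^2 ≤ ρ 2 ^ 2 := by gcongr
  linarith

lemma base_bound (h : IsDickman ρ) (hC : Continuous ρ) {m n : ℕ} (hm : 1 ≤ m) (hn : n ≤ 3 * m + 1) :
    |permProb n m - FF ρ m n| ≤ 3072 / (m:ℝ) * FF ρ m n := by
  have hm' : (1:ℝ) ≤ m := by exact_mod_cast hm
  have hn' : (n:ℝ) ≤ 3 * m + 1 := by exact_mod_cast hn
  have hF : 1 / 768 ≤ FF ρ m n := by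
    refine (dick_three h hC).trans ?_
    apply dick_antitone h (Set.mem_Ici.2 (by positivity)) (Set.mem_Ici.2 (by norm_num))
    rw [div_le_iff₀ (by positivity)]
    linarith
  refine (err_crude h hC hm n).trans ?_
  have h1 : (n:ℝ) / (m:ℝ)^2 ≤ 4 / m := by
    rw [div_le_div_iff₀ (by positivity) (by positivity)]
    nlinarith
  have h2 : 3072 / (m:ℝ) * (1/768) ≤ 3072 / (m:ℝ) * FF ρ m n := by gcongr
  have h3 : 3072 / (m:ℝ) * (1/768) = 4 / m := by ring
  linarith

lemma U_ge_three {m n : ℕ} (hn : 3 * m + 1 < n) : 3 ≤ ((n:ℝ) + 1/2) / ((m:ℝ) + 1/2) := by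
  have hn' : (3 * m + 2 : ℝ) ≤ n := by exact_mod_cast hn
  rw [le_div_iff₀ (by positivity)]
  linarith

lemma upper_bound (h : IsDickman ρ) (hC : Continuous ρ) {m : ℕ} (hm : 1 ≤ m) (n : ℕ) :
    permProb n m ≤ (1 + 3072 / (m:ℝ)) * FF ρ m n := by
  induction n using Nat.strong_induction_on with
  | _ n ih =>
  rcases le_or_gt n (3 * m + 1) with hn | hn
  · have := (abs_le.1 (base_bound h hC hm hn)).2
    linarith
  have hr := permProb_rec n m hm (by omega)
  have hd := (disc_fine h hC (by omega : m ≤ n) (by linarith [U_ge_three hn])).1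
  have hn0 : (0:ℝ) < n := by exact_mod_cast (by omega : 0 < n)
  have h1 : ∑ j ∈ Finset.Icc 1 m, permProb (n-j) m ≤
      ∑ j ∈ Finset.Icc 1 m, (1 + 3072 / (m:ℝ)) * FF ρ m (n-j) := by
    refine Finset.sum_le_sum fun j hj => ?_
    obtain ⟨hj1, hj2⟩ := Finset.mem_Icc.1 hj
    exact ih (n - j) (by omega)
  rw [← hr, ← Finset.mul_sum] at h1
  have hK : 0 ≤ 1 + 3072 / (m:ℝ) := by positivity
  have h2 : (1 + 3072 / (m:ℝ)) * ∑ j ∈ Finset.Icc 1 m, FF ρ m (n-j)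
      ≤ (1 + 3072 / (m:ℝ)) * (n * FF ρ m n) := by
    apply mul_le_mul_of_nonneg_left _ hK
    linarith
  exact le_of_mul_le_mul_left (by linarith) hn0

lemma ratio_one (h : IsDickman ρ) (hC : Continuous ρ) {U l : ℝ} (hU : 2 ≤ U) (hl : 1 ≤ l)
    (hlog : Real.log U ≤ l) : ρ (U - 1) ≤ 3 * U * l * ρ U := by
  have hp := h.2.1 U (by linarith)
  have e : ρ (U - 1) = (U * rr ρ U) * ρ U := by unfold rr; field_simp
  rw [e]
  apply mul_le_mul_of_nonneg_right _ hp.le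
  have h1 := rr_le_xi h hC hU
  have h2 := xi_le_log (by linarith : 1 ≤ U)
  nlinarith

lemma D_bound (h : IsDickman ρ) (hC : Continuous ρ) {m n : ℕ} (hm : 1 ≤ m) (hn : 3 * m + 1 < n)
    {l : ℝ} (hl : 1 ≤ l) (hlog : Real.log (((n:ℝ) + 1/2) / ((m:ℝ) + 1/2)) ≤ l) :
    (n:ℝ) * FF ρ m n - ∑ j ∈ Finset.Icc 1 m, FF ρ m (n - j) ≤
      7 * l^2 / (m:ℝ)^2 * (n * FF ρ m n) := by
  have hU3 := U_ge_three hn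
  have hd := (disc_fine h hC (by omega : m ≤ n) (by linarith)).2
  refine hd.trans ?_
  have hm' : (1:ℝ) ≤ m := by exact_mod_cast hm
  have hn1 : (1:ℝ) ≤ n := by exact_mod_cast (by omega : 1 ≤ n)
  have hUM : ((n:ℝ) + 1/2) / ((m:ℝ) + 1/2) * ((m:ℝ) + 1/2) = n + 1/2 := by field_simp
  have hF : FF ρ m n = ρ (((n:ℝ) + 1/2) / ((m:ℝ) + 1/2)) := rfl
  rw [hF]
  set U := ((n:ℝ) + 1/2) / ((m:ℝ) + 1/2)
  have r1 := ratio_one h hC (by linarith : 2 ≤ U) hl hlog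
  have r2 := ratio_one h hC (by linarith : 2 ≤ U - 1) hl
    ((Real.log_le_log (by linarith) (by linarith)).trans hlog)
  have hp := h.2.1 U (by linarith)
  have hdd : dd ρ (U - 1) ≤ 9 * U * l ^ 2 * ρ U := by
    unfold dd
    rw [div_le_iff₀ (by linarith)]
    refine r2.trans ?_
    have : 3 * (U - 1) * l * ρ (U - 1) ≤ 3 * (U - 1) * l * (3 * U * l * ρ U) := by
      apply mul_le_mul_of_nonneg_left r1
      have : 0 ≤ U - 1 := by linarith
      positivity
    linarith
  have hUle : 1 / ((m:ℝ) + 1/2) / 2 * U ≤ 3 / 4 * (n / (m:ℝ)^2) := by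
    have : 1 / ((m:ℝ) + 1/2) / 2 * U = (n + 1/2) / (2 * ((m:ℝ) + 1/2)^2) := by
      rw [← hUM]; field_simp
    rw [this, ← mul_div_assoc, div_le_div_iff₀ (by positivity) (by positivity)]
    have : (m:ℝ)^2 ≤ ((m:ℝ)+1/2)^2 := by gcongr; linarith
    nlinarith
  calc 1 / ((m:ℝ) + 1/2) / 2 * dd ρ (U - 1)
      ≤ 1 / ((m:ℝ) + 1/2) / 2 * (9 * U * l ^ 2 * ρ U) := by gcongr
    _ = (1 / ((m:ℝ) + 1/2) / 2 * U) * (9 * l^2 * ρ U) := by ring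
    _ ≤ (3 / 4 * (n / (m:ℝ)^2)) * (9 * l^2 * ρ U) := by gcongr
    _ = (27/4) * (l^2 / (m:ℝ)^2 * (n * ρ U)) := by ring
    _ ≤ 7 * (l^2 / (m:ℝ)^2 * (n * ρ U)) := by
        apply mul_le_mul_of_nonneg_right (by norm_num); positivity
    _ = _ := by ring

lemma lower_bound (h : IsDickman ρ) (hC : Continuous ρ) {m : ℕ} (hm : 1 ≤ m)
    {l c : ℝ} (hl : 1 ≤ l) (hlm : 14 * l^2 ≤ (m:ℝ)^2) (hc0 : 0 ≤ c)
    (hc : c = 0 ∨ c ≤ 1 - 3072 / (m:ℝ)) (n : ℕ)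
    (hlog : Real.log (((n:ℝ) + 1/2) / ((m:ℝ) + 1/2)) ≤ l) :
    c * (FF ρ m n * Real.exp (-(28 * l^2 / (m:ℝ)^3 * n))) ≤ permProb n m := by
  induction n using Nat.strong_induction_on with
  | _ n ih =>
  have hm' : (1:ℝ) ≤ m := by exact_mod_cast hm
  set ε := 28 * l^2 / (m:ℝ)^3 with hε
  have hε0 : 0 < ε := by positivity
  have hFp := FF_pos h m n
  rcases le_or_gt n (3 * m + 1) with hn | hn
  · rcases hc with rfl | hc
    · rw [zero_mul]; exact permProb_nonneg n m
    have h1 := (abs_le.1 (base_bound h hC hm hn)).1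
    have h2 : Real.exp (-(ε * n)) ≤ 1 := by
      apply Real.exp_le_one_iff.2
      have : 0 ≤ ε * n := by positivity
      linarith
    have h3 : c * (FF ρ m n * Real.exp (-(ε * n))) ≤ c * (FF ρ m n * 1) := by gcongr
    have h4 : c * FF ρ m n ≤ (1 - 3072 / (m:ℝ)) * FF ρ m n := by gcongr
    linarith
  have hr := permProb_rec n m hm (by omega)
  have hD := D_bound h hC hm hn hl hlog
  have hn0 : (0:ℝ) < n := by exact_mod_cast (by omega : 0 < n)
  set S := ∑ j ∈ Finset.Icc 1 m, FF ρ m (n - j) with hS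
  have hy : 7 * l^2 / (m:ℝ)^2 ≤ 1/2 := by
    rw [div_le_iff₀ (by positivity)]; linarith
  have hnF : 0 < n * FF ρ m n := by positivity
  have hSge : n * FF ρ m n / 2 ≤ S := by nlinarith
  -- Chebyshev
  have hcheb : ((m:ℝ) + 1) / 2 * S ≤ ∑ j ∈ Finset.Icc 1 m, (j:ℝ) * FF ρ m (n - j) := by
    have hmv : MonovaryOn (fun j : ℕ => (j:ℝ)) (fun j : ℕ => FF ρ m (n - j)) (Finset.Icc 1 m) := by
      intro i hi j hj hij
      simp only [Finset.coe_Icc, Set.mem_Icc] at hi hj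
      by_contra hcon
      push Not at hcon
      have hji : j < i := by exact_mod_cast hcon
      apply absurd hij
      push Not
      unfold FF
      apply dick_antitone h (Set.mem_Ici.2 (by positivity)) (Set.mem_Ici.2 (by positivity))
      have : ((n - i : ℕ) : ℝ) ≤ ((n - j : ℕ) : ℝ) := by exact_mod_cast (by omega)
      gcongr
    have := hmv.sum_mul_sum_le_card_mul_sum
    have h3 : ∑ j ∈ Finset.Icc 1 m, (j:ℝ) = (m:ℝ) * (m + 1) / 2 := by
      clear * -
      induction m with
      | zero => simp
      | succ k ih => rw [Finset.sum_Icc_succ_top (by omega), ih]; push_cast; ring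
    rw [h3, Nat.card_Icc, Nat.add_sub_cancel] at this
    have hm0 : (0:ℝ) < m := by linarith
    apply le_of_mul_le_mul_left _ hm0
    linarith
  have hstep : ∑ j ∈ Finset.Icc 1 m, c * Real.exp (-(ε * n)) * (FF ρ m (n-j) + ε * (j * FF ρ m (n-j)))
      ≤ ∑ j ∈ Finset.Icc 1 m, permProb (n-j) m := by
    refine Finset.sum_le_sum fun j hj => ?_
    obtain ⟨hj1, hj2⟩ := Finset.mem_Icc.1 hj
    have hFj := FF_pos h m (n-j)
    refine le_trans ?_ (ih (n - j) (by omega) (le_trans ?_ hlog))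
    · rw [Nat.cast_sub (by omega)]
      have e : Real.exp (-(ε * ((n:ℝ) - j))) = Real.exp (-(ε * n)) * Real.exp (ε * j) := by
        rw [← Real.exp_add]; ring_nf
      rw [e]
      have h1 := Real.add_one_le_exp (ε * j)
      have h2 : c * Real.exp (-(ε * n)) * FF ρ m (n-j) * (ε * j + 1)
        ≤ c * Real.exp (-(ε * n)) * FF ρ m (n-j) * Real.exp (ε * j) := by gcongr
      linarith
    · have : ((n - j : ℕ) : ℝ) ≤ n := by exact_mod_cast (by omega)
      gcongr
  rw [← hr, ← Finset.mul_sum, Finset.sum_add_distrib, ← Finset.mul_sum, ← hS] at hstep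
  have hmain : n * FF ρ m n ≤ S + ε * ∑ j ∈ Finset.Icc 1 m, (j:ℝ) * FF ρ m (n - j) := by
    have h1 : ε * (((m:ℝ) + 1) / 2 * S) ≤ ε * ∑ j ∈ Finset.Icc 1 m, (j:ℝ) * FF ρ m (n - j) := by gcongr
    have h2 : 7 * l^2 / (m:ℝ)^2 * (n * FF ρ m n) ≤ ε * (((m:ℝ) + 1) / 2 * S) := by
      have e1 : 7 * l^2 / (m:ℝ)^2 * (n * FF ρ m n) = ε * ((m:ℝ) / 2 * (n * FF ρ m n / 2)) := by
        rw [hε]; field_simp; ring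
      rw [e1]
      have : (m:ℝ) / 2 ≤ ((m:ℝ) + 1) / 2 := by linarith
      gcongr
    linarith
  have hfin : c * Real.exp (-(ε * n)) * (n * FF ρ m n) ≤ n * permProb n m :=
    le_trans (mul_le_mul_of_nonneg_left hmain (by positivity)) hstep
  apply le_of_mul_le_mul_left _ hn0
  linarith

end disc


section P4
variable {ρ : ℝ → ℝ}

lemma dick_ext (h : IsDickman ρ) :
    IsDickman (fun x => ρ (max x 0)) ∧ Continuous (fun x => ρ (max x 0)) := by
  have hC : Continuous (fun x => ρ (max x 0)) :=
    h.1.comp_continuous (by fun_prop) (fun x => le_max_right x 0)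
  refine ⟨⟨hC.continuousOn, fun t _ => h.2.1 _ (le_max_right _ _), fun t ht => ?_, fun t ht => ?_⟩, hC⟩
  · simp only [max_eq_left ht.1]
    exact h.2.2.1 t ht
  · have h1 := h.2.2.2 t ht
    simp only [max_eq_left (by linarith : (0:ℝ) ≤ t - 1)]
    refine h1.congr_of_eventuallyEq ?_
    filter_upwards [lt_mem_nhds (by linarith : (0:ℝ) < t)] with x hx
    rw [max_eq_left hx.le]

set_option maxHeartbeats 800000 in
lemma eta_bound (h : IsDickman ρ) (hC : Continuous ρ) {m n : ℕ} (hm : 1 ≤ m) (hmn : m < n)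
    {A l u : ℝ} (hu : u = (n:ℝ) / (m:ℝ)) (hl : 1 / 2 ≤ l) (hlu : Real.log u ≤ l)
    (hul : u * (l / m) ≤ 2 * A^2) :
    |Real.log (FF ρ m n) - Real.log (ρ u) - u * xi u / (2 * (m:ℝ))| ≤ (6 * A^2 + 17) * (l / m) := by
  have hm' : (1:ℝ) ≤ m := by exact_mod_cast hm
  have hm0 : (0:ℝ) < m := by linarith
  have hn' : (m:ℝ) < n := by exact_mod_cast hmn
  have hu1 : 1 < u := by rw [hu, one_lt_div hm0]; exact hn'
  have hnu : (n:ℝ) = u * m := by rw [hu]; field_simp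
  set M : ℝ := (m:ℝ) + 1/2 with hM
  have hM0 : 0 < M := by positivity
  set U : ℝ := ((n:ℝ) + 1/2) / M with hU
  have hUM : U * M = u * m + 1/2 := by rw [hU, hnu]; field_simp
  have hU1 : 1 ≤ U := by rw [hU, one_le_div hM0]; linarith
  set d : ℝ := u - U with hd
  set w : ℝ := 1 / (m:ℝ) with hw
  have hw0 : 0 < w := by positivity
  have hwm : w * m = 1 := by rw [hw]; field_simp
  set B : ℝ := l / m with hB
  have hBw : B = l * w := by rw [hB, hw]; ring
  have hwB : w ≤ 2 * B := by rw [hBw]; nlinarith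
  have hB0 : 0 < B := by linarith
  have hdM : d = (u - 1) / (2 * M) := by
    rw [eq_div_iff (by positivity), hd]; nlinarith
  have hd0 : 0 ≤ d := by rw [hdM]; apply div_nonneg <;> linarith
  have hd1 : d ≤ u * w / 2 := by
    have : u * w / 2 = u / (2 * m) := by rw [hw]; field_simp
    rw [this, hdM]
    apply div_le_div₀ <;> linarith
  have hd2 : u * w / 2 - u * w^2 / 4 - w / 2 ≤ d := by
    have e : u * w / 2 - d = (u + 2 * m) / (2 * m * (2 * M)) := by
      rw [hdM, hw, hM]; field_simp; ring
    have e2 : u * w^2 / 4 + w / 2 = (u + 2 * m) / (4 * m^2) := by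
      rw [hw]; field_simp; ring
    have e3 : (u + 2 * m) / (2 * m * (2 * M)) ≤ (u + 2 * m) / (4 * m^2) := by
      apply div_le_div_of_nonneg_left <;> nlinarith
    linarith
  have hUu : U ≤ u := by linarith
  obtain ⟨m1, m2⟩ := log_mvt h hC hU1 hUu
  have hx0 := xi_nonneg hu1.le
  have hx2 : xi u ≤ 2 * l := (xi_le_log hu1.le).trans (by linarith)
  have eF : Real.log (FF ρ m n) = Real.log (ρ U) := rfl
  have eX : u * xi u / (2 * (m:ℝ)) = u * w * xi u / 2 := by rw [hw]; field_simp
  rw [eF, eX]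
  have hA := sq_nonneg A
  have hAB : 0 ≤ A^2 * B := by positivity
  change d * rr ρ U ≤ _ at m1
  change _ ≤ d * rr ρ u at m2
  rw [abs_le]
  rcases le_or_gt 2 U with h2 | h2
  · have r1 := rr_ge_xi h hC h2
    have r2 := rr_le_xi h hC (h2.trans hUu)
    have r3 := xi_sub_le (by linarith : 1 < U) hUu
    have r4 : Real.log (u / U) ≤ u / U - 1 := Real.log_le_sub_one_of_pos (by positivity)
    have r5 : u / U ≤ 1 + w / 2 := by
      rw [div_le_iff₀ (by linarith)]
      have : (1 + w/2) * m = M := by rw [hM]; linarith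
      have e : (1 + w / 2) * U * m = u * m + 1/2 := by rw [← hUM, ← this]; ring
      refine le_of_mul_le_mul_right ?_ hm0
      linarith
    have r6 : xi u - w ≤ rr ρ U := by linarith
    have m3 : d * (xi u - w) ≤ d * rr ρ U := mul_le_mul_of_nonneg_left r6 hd0
    have hur : 0 < rr ρ u := rr_pos h hu1.le
    have hdr : d * rr ρ u ≤ u * w / 2 * rr ρ u := mul_le_mul_of_nonneg_right hd1 hur.le
    have hdr2 : u * w / 2 * rr ρ u ≤ w / 2 * (1 + u * xi u) := by
      have := mul_le_mul_of_nonneg_left r2 (by positivity : 0 ≤ w / 2)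
      linarith
    have q1 : (u * w / 2 - u * w^2 / 4 - w / 2) * xi u ≤ d * xi u := mul_le_mul_of_nonneg_right hd2 hx0
    have q2 : d * w ≤ u * w / 2 * w := mul_le_mul_of_nonneg_right hd1 hw0.le
    have q3 : (u * w^2/4 + w/2) * xi u ≤ (u * w^2/4 + w/2) * (2 * l) :=
      mul_le_mul_of_nonneg_left hx2 (by positivity)
    have q4 : (u * w^2/4 + w/2) * (2 * l) = (u * B) * w / 2 + B := by rw [hBw]; ring
    have q5 : (u * B) * w ≤ 2 * A^2 * w := mul_le_mul_of_nonneg_right hul hw0.le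
    have q6 : A^2 * w ≤ A^2 * (2 * B) := mul_le_mul_of_nonneg_left hwB hA
    have q7 : u * w / 2 * w ≤ u * w / 2 * (2 * B) := mul_le_mul_of_nonneg_left hwB (by positivity)
    constructor
    · linarith
    · linarith
  · have hu3 : u ≤ 3 := by
      have : U * M ≤ 2 * M := mul_le_mul_of_nonneg_right h2.le hM0.le
      refine le_of_mul_le_mul_right ?_ hm0
      linarith
    have r1 := rr_le_xi h hC (by norm_num : (2:ℝ) ≤ 3)
    have r2 := xi_le_log (by norm_num : (1:ℝ) ≤ 3)
    have r3 : Real.log 3 ≤ 3 - 1 := Real.log_le_sub_one_of_pos (by norm_num)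
    have r4 := xi_mono hu1.le hu3
    have r5 := rr_mono h hC (Set.mem_Ici.2 hu1.le) (Set.mem_Ici.2 (by norm_num : (1:ℝ) ≤ 3)) hu3
    have r6 := rr_pos h hu1.le
    have r7 := rr_pos h hU1
    have q1 : d * rr ρ u ≤ (3 * w / 2) * 5 := by
      have := mul_le_mul_of_nonneg_right hu3 hw0.le
      apply mul_le_mul <;> linarith
    have q2 : 0 ≤ d * rr ρ U := by positivity
    have q3 : u * w * xi u ≤ 3 * w * 4 := by
      have := mul_le_mul_of_nonneg_right hu3 hw0.le
      apply mul_le_mul <;> linarith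
    have q4 : 0 ≤ u * w * xi u := by positivity
    constructor <;> linarith

lemma p_bound (h : IsDickman ρ) (hC : Continuous ρ) {m n : ℕ} (hm : 1 ≤ m) (hmn : m < n)
    {A u : ℝ} (hu : u = (n:ℝ) / (m:ℝ)) 
    (hul : u * (Real.log (u + 1) / m) ≤ 2 * A^2) :
    |permProb n m / FF ρ m n - 1| ≤ (6148 + 56 * A^2) * (Real.log (u + 1) / m) := by
  have hm' : (1:ℝ) ≤ m := by exact_mod_cast hm
  have hm0 : (0:ℝ) < m := by linarith
  have hn' : (m:ℝ) < n := by exact_mod_cast hmn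
  have hu1 : 1 < u := by rw [hu, one_lt_div hm0]; exact hn'
  have hnu : (n:ℝ) = u * m := by rw [hu]; field_simp
  have hF := FF_pos h m n
  have hp := permProb_nonneg n m
  set l := Real.log (u + 1) with hl
  have hl2 : 1 / 2 ≤ l := by
    have : Real.log 2 ≤ l := Real.log_le_log (by norm_num) (by linarith)
    linarith [Real.log_two_gt_d9]
  set w : ℝ := 1 / (m:ℝ) with hw
  have hw0 : 0 < w := by positivity
  set B : ℝ := l / m with hB
  have hBw : B = l * w := by rw [hB, hw]; ring
  have hwB : w ≤ 2 * B := by rw [hBw]; nlinarith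
  have hB0 : 0 < B := by linarith
  have e3 : 3072 / (m:ℝ) = 3072 * w := by rw [hw]; ring
  have hAB : 0 ≤ A^2 * B := by positivity
  have hup := upper_bound h hC hm n
  rw [e3] at hup
  have hup2 : permProb n m / FF ρ m n ≤ 1 + 3072 * w := by rwa [div_le_iff₀ hF]
  have hq0 : 0 ≤ permProb n m / FF ρ m n := by positivity
  rw [abs_le]
  refine ⟨?_, by linarith⟩
  rcases le_or_gt n (3 * m + 1) with h3 | h3
  · have hb := base_bound h hC hm h3
    rw [e3] at hb
    have hb2 := (abs_le.1 hb).1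
    have : 1 - 3072 * w ≤ permProb n m / FF ρ m n := by rw [le_div_iff₀ hF]; linarith
    linarith
  · have h3' : 3 * (m:ℝ) + 1 < n := by exact_mod_cast h3
    have hu3 : 3 < u := by rw [hu, lt_div_iff₀ hm0]; linarith
    have hl1 : 1 ≤ l := by
      rw [hl, Real.le_log_iff_exp_le (by linarith)]
      linarith [Real.exp_one_lt_d9]
    rcases le_or_gt (14 * l^2) ((m:ℝ)^2) with hlm | hlm
    · have hUl : Real.log (((n:ℝ) + 1/2) / ((m:ℝ) + 1/2)) ≤ l := by
        apply Real.log_le_log (by positivity)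
        rw [div_le_iff₀ (by positivity), hnu]
        nlinarith
      have hlb := lower_bound h hC hm hl1 hlm (le_max_left 0 (1 - 3072 / (m:ℝ)))
        (by rcases max_choice 0 (1 - 3072 / (m:ℝ)) with h | h
            · left; exact h
            · right; exact h.le) n hUl
      set c := max 0 (1 - 3072 / (m:ℝ)) with hc
      have hc0 : 0 ≤ c := le_max_left _ _
      have hc1 : 1 - 3072 * w ≤ c := by rw [← e3]; exact le_max_right _ _
      have hc2 : c ≤ 1 := max_le (by norm_num) (by rw [e3]; linarith)
      set x := 28 * l^2 / (m:ℝ)^3 * n with hx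
      have hx0 : 0 ≤ x := by positivity
      have hxB : x ≤ 56 * A^2 * B := by
        have : x = 28 * (u * B) * B := by rw [hx, hnu, hB]; field_simp
        rw [this]; nlinarith
      have hex : 1 - x ≤ Real.exp (-x) := by linarith [Real.add_one_le_exp (-x)]
      have hlb2 : c * Real.exp (-x) ≤ permProb n m / FF ρ m n := by
        rw [le_div_iff₀ hF]; linarith
      have : c * (1 - x) ≤ c * Real.exp (-x) := mul_le_mul_of_nonneg_left hex hc0
      nlinarith
    · have : (m:ℝ) < 4 * l := by
        by_contra hh
        push Not at hh
        nlinarith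
      have : 1 ≤ 4 * B := by
        rw [hB, ← mul_div_assoc, le_div_iff₀ hm0]; linarith
      linarith

lemma stmt_cont (h : IsDickman ρ) (hC : Continuous ρ) {m n : ℕ} (hm : 1 ≤ m) (hmn : m < n)
    {A u : ℝ} (hA : 0 < A) (hu : u = (n:ℝ) / (m:ℝ))
    (hs : Real.sqrt ((n : ℝ) * Real.log n) ≤ A * (m : ℝ)) :
    |permProb n m / (ρ u * Real.exp (u * xi u / (2 * (m : ℝ)))) - 1| ≤
        (((6148 + 56 * A^2) + (6 * A^2 + 17)) * Real.exp ((6 * A^2 + 17) * (2 * A^2)))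
          * Real.log (u + 1) / (m : ℝ) := by
  have hm' : (1:ℝ) ≤ m := by exact_mod_cast hm
  have hm0 : (0:ℝ) < m := by linarith
  have hn' : (m:ℝ) < n := by exact_mod_cast hmn
  have hn2 : (2:ℝ) ≤ n := by exact_mod_cast (by omega : 2 ≤ n)
  have hu1 : 1 < u := by rw [hu, one_lt_div hm0]; exact hn'
  have hnu : (n:ℝ) = u * m := by rw [hu]; field_simp
  have hun : u ≤ n := by rw [hnu]; nlinarith
  have hln : 0 < Real.log n := Real.log_pos (by linarith)
  have hl2n : Real.log (u + 1) ≤ 2 * Real.log n := by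
    have : 2 * Real.log n = Real.log ((n:ℝ)^2) := by rw [Real.log_pow]; norm_num
    rw [this]
    apply Real.log_le_log (by linarith)
    nlinarith
  have hsq : (n:ℝ) * Real.log n ≤ A^2 * m^2 := by
    have := Real.sqrt_le_iff.1 hs
    nlinarith [this.2]
  have hul : u * (Real.log (u + 1) / m) ≤ 2 * A^2 := by
    have : u * (Real.log (u + 1) / m) = n * Real.log (u+1) / m^2 := by rw [hnu]; field_simp
    rw [this, div_le_iff₀ (by positivity)]
    nlinarith
  have hP := p_bound h hC hm hmn hu hul
  have hl2 : 1 / 2 ≤ Real.log (u+1) := by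
    have : Real.log 2 ≤ Real.log (u+1) := Real.log_le_log (by norm_num) (by linarith)
    linarith [Real.log_two_gt_d9]
  have hE := eta_bound h hC hm hmn hu hl2 (Real.log_le_log (by linarith) (by linarith)) hul
  rw [mul_div_assoc _ (Real.log (u + 1))]
  set B := Real.log (u + 1) / m with hB
  have hB0 : 0 < B := by positivity
  have hBA : B ≤ 2 * A^2 := by nlinarith
  set y := Real.log (FF ρ m n) - Real.log (ρ u) - u * xi u / (2 * (m:ℝ)) with hy
  have hF := FF_pos h m n
  have hr := h.2.1 u (by linarith)
  have hey : Real.exp y = FF ρ m n / (ρ u * Real.exp (u * xi u / (2 * (m : ℝ)))) := by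
    rw [hy, Real.exp_sub, Real.exp_sub, Real.exp_log hF, Real.exp_log hr, div_div]
  have eq : permProb n m / (ρ u * Real.exp (u * xi u / (2 * (m : ℝ))))
      = (permProb n m / FF ρ m n) * Real.exp y := by
    rw [hey]; field_simp
  rw [eq]
  set x := permProb n m / FF ρ m n with hx
  set E := Real.exp ((6 * A^2 + 17) * (2 * A^2)) with hEE
  have hyE : |y| ≤ (6 * A^2 + 17) * (2 * A^2) :=
    hE.trans (mul_le_mul_of_nonneg_left hBA (by positivity))
  have hexp : Real.exp y ≤ E := Real.exp_le_exp.2 ((le_abs_self y).trans hyE)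
  have hE1 : 1 ≤ E := Real.one_le_exp (by positivity)
  have hy1 : |Real.exp y - 1| ≤ (6 * A^2 + 17) * B * E := by
    have k1 := Real.add_one_le_exp y
    have k2 := Real.add_one_le_exp (-y)
    have k3 : Real.exp y * Real.exp (-y) = 1 := by rw [← Real.exp_add]; simp
    have k4 : Real.exp y - 1 ≤ y * Real.exp y := by
      nlinarith [Real.exp_pos y]
    have k5 : y * Real.exp y ≤ (6 * A^2 + 17) * B * E := by
      calc y * Real.exp y ≤ |y| * Real.exp y :=
            mul_le_mul_of_nonneg_right (le_abs_self y) (Real.exp_pos y).le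
        _ ≤ _ := mul_le_mul hE hexp (Real.exp_pos y).le (by positivity)
    have k6 : (6 * A^2 + 17) * B ≤ (6 * A^2 + 17) * B * E := by
      apply le_mul_of_one_le_right (by positivity) hE1
    have k7 := (abs_le.1 hE).1
    rw [abs_le]
    constructor <;> linarith
  have hfin : |x * Real.exp y - 1| ≤ |x - 1| * Real.exp y + |Real.exp y - 1| := by
    have : x * Real.exp y - 1 = (x - 1) * Real.exp y + (Real.exp y - 1) := by ring
    rw [this]
    refine (abs_add_le _ _).trans ?_
    rw [abs_mul, abs_of_pos (Real.exp_pos y)]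
  have h7 : |x - 1| * Real.exp y ≤ (6148 + 56 * A^2) * B * E :=
    mul_le_mul hP hexp (Real.exp_pos y).le (by positivity)
  calc _ ≤ _ := hfin
    _ ≤ (6148 + 56 * A^2) * B * E + (6 * A^2 + 17) * B * E := add_le_add h7 hy1
    _ = _ := by ring

end P4


end

/-- For every `A > 0` there exists `C > 0` such that for all integers
`n ≥ m ≥ 1` with `√(n·log n) ≤ A·m`, writing `u = n/m`, one has
`|p_{n,m}/(ρ(u)·exp(u·ξ(u)/(2m))) − 1| ≤ C·log(u+1)/m`. -/
theorem stmt1 :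
    ∀ A : ℝ, 0 < A → ∃ C : ℝ, 0 < C ∧ ∀ n m : ℕ, 1 ≤ m → m ≤ n →
      Real.sqrt ((n : ℝ) * Real.log n) ≤ A * (m : ℝ) →
      ∀ ρ : ℝ → ℝ, IsDickman ρ → ∀ u : ℝ, u = (n : ℝ) / (m : ℝ) →
      |permProb n m / (ρ u * Real.exp (u * xi u / (2 * (m : ℝ)))) - 1| ≤
        C * Real.log (u + 1) / (m : ℝ) := by
  intro A hA
  refine ⟨((6148 + 56 * A^2) + (6 * A^2 + 17)) * Real.exp ((6 * A^2 + 17) * (2 * A^2)),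
    by positivity, ?_⟩
  intro n m hm hmn hs ρ h u hu
  have hm' : (1:ℝ) ≤ m := by exact_mod_cast hm
  have hm0 : (0:ℝ) < m := by linarith
  have hn' : (m:ℝ) ≤ n := by exact_mod_cast hmn
  have hu1 : 1 ≤ u := by rw [hu, one_le_div hm0]; exact hn'
  rcases hmn.lt_or_eq with hlt | rfl
  · obtain ⟨h1, h2⟩ := dick_ext h
    have := stmt_cont h1 h2 hm hlt hA hu hs
    simpa only [max_eq_left (by linarith : (0:ℝ) ≤ u)] using this
  · have hu' : u = 1 := by rw [hu]; field_simp
    have hr : ρ 1 = 1 := h.2.2.1 1 (by simp)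
    rw [hu', permProb_one m m le_rfl, xi_one, hr]
    have : 0 ≤ Real.log (1 + 1) := Real.log_nonneg (by norm_num)
    simp only [mul_zero, zero_div, Real.exp_zero, mul_one, div_one, sub_self, abs_zero]
    positivity
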